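/- arXiv:2402.08962 — 2 statements merged into one kernel-verified Lean document; each statement's English description precedes it below -/
import Mathlib

section
/- Let A be the ring of integers of a global function field, i.e. the integral closure of F_q[t] in a finite field extension K of F_q(t), where F_q is a finite field. Let G be a finite subgroup of GL_2(A) acting linearly on R = A[X,Y] (fixing A). Then the ring of invariants R^G is Cohen-Macaulay. -/
/-- A Noetherian local ring is Cohen–Macaulay if it admits a regular sequence, consisting of
elements of the maximal ideal, whose length equals the Krull dimension of the ring. -/
def IsCohenMacaulayLocalRing (R : Type*) [CommRing R] [IsLocalRing R] : Prop :=
  ∃ (n : ℕ) (rs : List R), ringKrullDim R = n ∧ rs.length = n ∧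
    (∀ x ∈ rs, x ∈ IsLocalRing.maximalIdeal R) ∧ RingTheory.Sequence.IsRegular R rs

/-- A Noetherian ring is Cohen–Macaulay if all its localizations at prime ideals are
Cohen–Macaulay local rings. -/
def IsCohenMacaulayRing (R : Type*) [CommRing R] : Prop :=
  IsNoetherianRing R ∧
    ∀ (P : Ideal R) (_ : P.IsPrime), IsCohenMacaulayLocalRing (Localization.AtPrime P)

/-- The ring of invariants `R^G` of a subgroup `G ⊆ GL_n(A)` acting linearly on the
polynomial ring `R = A[X_1, …, X_n]` (fixing `A`), via the standard action of `GL_n(A)`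
on the `A`-span of `X_1, …, X_n`. -/
noncomputable def glInvariants {A : Type*} [CommRing A] {n : ℕ}
    (G : Subgroup (Matrix.GeneralLinearGroup (Fin n) A)) :
    Subalgebra A (MvPolynomial (Fin n) A) where
  carrier := {f | ∀ g ∈ G,
    MvPolynomial.aeval
      (fun i => ∑ j, ((g : Matrix (Fin n) (Fin n) A) i j) • MvPolynomial.X j) f = f}
  mul_mem' := by
    intro a b ha hb g hg
    rw [map_mul, ha g hg, hb g hg]
  add_mem' := by
    intro a b ha hb g hg
    rw [map_add, ha g hg, hb g hg]
  algebraMap_mem' := fun a g _ => MvPolynomial.aeval_C _ a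

section

open IsLocalRing RingTheory.Sequence

theorem RegAux.quotient_spanFinrank {R : Type*} [CommRing R] [IsLocalRing R] [IsNoetherianRing R]
    (n : ℕ) (hn : (maximalIdeal R).spanFinrank = n + 1) (x : R) (hx : x ∈ maximalIdeal R)
    (hx2 : x ∉ (maximalIdeal R) ^ 2) :
    ((maximalIdeal R).map (Ideal.Quotient.mk (Ideal.span {x}))).spanFinrank ≤ n := by
  classical
  rw [spanFinrank_maximalIdeal_eq_finrank_cotangentSpace] at hn
  set V := CotangentSpace R
  set x0 : maximalIdeal R := ⟨x, hx⟩
  set xb : V := (maximalIdeal R).toCotangent x0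
  have hxb : xb ≠ 0 := by
    intro h
    exact hx2 (((maximalIdeal R).toCotangent_eq_zero x0).1 h)
  have hli : LinearIndepOn (ResidueField R) id ({xb} : Set V) := by
    simpa using hxb
  obtain ⟨b, -, hsb, htop, hb⟩ := exists_linearIndepOn_id_extension hli (Set.subset_univ _)
  have hspan : Submodule.span (ResidueField R) b = ⊤ := by
    rw [eq_top_iff]; intro y _; exact htop (Set.mem_univ y)
  have hbfin : b.Finite := hb.linearIndependent.setFinite
  have hcard : b.ncard = n + 1 := by
    have : Fintype b := hbfin.fintype
    have := finrank_span_set_eq_card (R := ResidueField R) (s := b) hb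
    rw [hspan, finrank_top, hn] at this
    rw [this, Set.ncard_eq_toFinset_card']
  obtain ⟨l0, hl0⟩ := (maximalIdeal R).toCotangent_surjective.hasRightInverse
  let l : V → maximalIdeal R := Function.update l0 xb x0
  have hl : ∀ v, (maximalIdeal R).toCotangent (l v) = v := by
    intro v
    by_cases h : v = xb
    · subst h; simp [l, xb]
    · simp only [l, Function.update_of_ne h]; exact hl0 v
  have hT : Submodule.span R (l '' b) = ⊤ := by
    rw [← CotangentSpace.span_image_eq_top_iff, Set.image_image]
    simp only [hl, Set.image_id']
    exact hspan
  have hT' : maximalIdeal R = Ideal.span ((fun v => (l v : R)) '' b) := by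
    have := congrArg (Submodule.map (Submodule.subtype (maximalIdeal R))) hT
    rw [Submodule.map_span, Submodule.map_top, Submodule.range_subtype, Set.image_image] at this
    exact this.symm
  have hxbb : xb ∈ b := hsb rfl
  have key : (maximalIdeal R).map (Ideal.Quotient.mk (Ideal.span {x})) =
      Ideal.span ((fun v => Ideal.Quotient.mk (Ideal.span {x}) (l v : R)) '' (b \ {xb})) := by
    conv_lhs => rw [hT']
    rw [Ideal.map_span, Set.image_image]
    apply le_antisymm
    · rw [Ideal.span_le]
      rintro _ ⟨v, hv, rfl⟩
      by_cases h : v = xb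
      · have : (l v : R) = x := by subst h; simp [l, x0]
        simp only [this]
        have h0 : Ideal.Quotient.mk (Ideal.span {x}) x = 0 :=
          Ideal.Quotient.eq_zero_iff_mem.2 (Ideal.mem_span_singleton_self x)
        rw [h0]; exact Ideal.zero_mem _
      · exact Ideal.subset_span ⟨v, ⟨hv, h⟩, rfl⟩
    · exact Ideal.span_mono (Set.image_mono Set.sdiff_subset)
  rw [key]
  refine (Submodule.spanFinrank_span_le_ncard_of_finite ((hbfin.sdiff).image _)).trans ?_
  refine (Set.ncard_image_le hbfin.sdiff).trans ?_
  have := Set.ncard_sdiff_singleton_add_one hxbb hbfin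
  omega

theorem RegAux.main (n : ℕ) : ∀ (R : Type) [CommRing R] [IsRegularLocalRing R],
    ringKrullDim R = n → IsDomain R ∧ ∃ rs : List R, rs.length = n ∧
      (∀ r ∈ rs, r ∈ maximalIdeal R) ∧ IsWeaklyRegular R rs := by
  induction n with
  | zero =>
    intro R _ _ h
    have h1 := IsRegularLocalRing.spanFinrank_maximalIdeal (R := R)
    rw [h] at h1
    have h2 : (maximalIdeal R).spanFinrank = 0 := by exact_mod_cast h1
    rw [Submodule.spanFinrank_eq_zero_iff_eq_bot (IsNoetherian.noetherian _)] at h2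
    have hf : IsField R := IsLocalRing.isField_iff_maximalIdeal_eq.2 h2
    exact ⟨hf.isDomain, [], rfl, by simp, by simp⟩
  | succ n ih =>
    intro R _ _ h
    have h1 := IsRegularLocalRing.spanFinrank_maximalIdeal (R := R)
    rw [h] at h1
    have h2 : (maximalIdeal R).spanFinrank = n + 1 := by exact_mod_cast h1
    have hht : (maximalIdeal R).height = n + 1 := by
      have := maximalIdeal_height_eq_ringKrullDim (R := R)
      rw [h] at this
      exact_mod_cast this
    have hex : ∃ x ∈ maximalIdeal R, x ∉ maximalIdeal R ^ 2 ∧ ∀ q ∈ minimalPrimes R, x ∉ q := by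
      by_contra! hcon
      have hfin : (insert (maximalIdeal R ^ 2) (minimalPrimes R)).Finite :=
        (minimalPrimes.finite_of_isNoetherianRing R).insert _
      have hsub : (maximalIdeal R : Set R) ⊆
          ⋃ i ∈ insert (maximalIdeal R ^ 2) (minimalPrimes R), ((id i : Ideal R) : Set R) := by
        intro x hx
        by_cases hx2 : x ∈ maximalIdeal R ^ 2
        · exact Set.mem_biUnion (Set.mem_insert _ _) hx2
        · obtain ⟨q, hq, hxq⟩ := hcon x hx hx2
          exact Set.mem_biUnion (Set.mem_insert_of_mem _ hq) hxq
      rw [Ideal.subset_union_prime_finite hfin (maximalIdeal R ^ 2) (maximalIdeal R ^ 2)] at hsub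
      · obtain ⟨i, hi, hle⟩ := hsub
        rcases hi with rfl | hi
        · have hb : maximalIdeal R = ⊥ := by
            apply Submodule.eq_bot_of_le_smul_of_le_jacobson_bot (maximalIdeal R) _
              (IsNoetherian.noetherian _)
            · simpa [pow_two] using hle
            · exact (IsLocalRing.jacobson_eq_maximalIdeal ⊥ bot_ne_top).ge
          rw [hb, Submodule.spanFinrank_bot] at h2
          omega
        · have : i.IsPrime := hi.1.1
          have he : i = maximalIdeal R := le_antisymm (le_maximalIdeal this.ne_top) hle
          rw [he, ← Ideal.height_eq_zero_iff, hht] at hi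
          simp at hi
      · intro i hi hi1 _
        rcases hi with rfl | hi
        · exact absurd rfl hi1
        · exact hi.1.1
    obtain ⟨x, hx, hx2, hxq⟩ := hex
    have hne : Ideal.span {x} ≠ (⊤ : Ideal R) := by
      intro ht
      exact (maximalIdeal.isMaximal R).ne_top (top_le_iff.1 (ht ▸ (Ideal.span_singleton_le_iff_mem _).2 hx))
    have : Nontrivial (R ⧸ Ideal.span {x}) := Ideal.Quotient.nontrivial_iff.2 hne
    have : IsLocalRing (R ⧸ Ideal.span {x}) :=
      IsLocalRing.of_surjective' (Ideal.Quotient.mk _) Ideal.Quotient.mk_surjective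
    have hmax : maximalIdeal (R ⧸ Ideal.span {x}) =
        (maximalIdeal R).map (Ideal.Quotient.mk (Ideal.span {x})) := by
      have hc : (maximalIdeal (R ⧸ Ideal.span {x})).comap (Ideal.Quotient.mk (Ideal.span {x})) =
          maximalIdeal R := by
        have := Ideal.comap_isMaximal_of_surjective (Ideal.Quotient.mk (Ideal.span {x}))
          Ideal.Quotient.mk_surjective (K := maximalIdeal (R ⧸ Ideal.span {x}))
        exact IsLocalRing.eq_maximalIdeal this
      rw [← hc, Ideal.map_comap_of_surjective _ Ideal.Quotient.mk_surjective]
    have hsp := RegAux.quotient_spanFinrank n h2 x hx hx2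
    rw [← hmax] at hsp
    have hdim := Ideal.height_le_ringKrullDim_quotient_add_one (p := maximalIdeal R) hx
    rw [hht] at hdim
    have hdim' : (n : WithBot ℕ∞) ≤ ringKrullDim (R ⧸ Ideal.span {x}) := by
      have hdim2 : ((n + 1 : ℕ) : WithBot ℕ∞) ≤ ringKrullDim (R ⧸ Ideal.span {x}) + 1 := by
        simpa using hdim
      have hnt := ringKrullDim_ne_bot (R := R ⧸ Ideal.span {x})
      obtain ⟨d, hd⟩ := WithBot.ne_bot_iff_exists.1 hnt
      rw [← hd] at hdim2 ⊢
      have h3 : ((n + 1 : ℕ) : ℕ∞) ≤ d + 1 := by exact_mod_cast hdim2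
      have h4 : (n : ℕ∞) ≤ d := by
        push_cast at h3
        exact (ENat.add_le_add_iff_right ENat.one_ne_top).1 h3
      exact_mod_cast h4
    have hreg : IsRegularLocalRing (R ⧸ Ideal.span {x}) :=
      IsRegularLocalRing.of_spanFinrank_maximalIdeal_le _
        (le_trans (by exact_mod_cast hsp) hdim')
    have hdimeq : ringKrullDim (R ⧸ Ideal.span {x}) = n :=
      le_antisymm ((ringKrullDim_le_spanFinrank_maximalIdeal _).trans (by exact_mod_cast hsp)) hdim'
    obtain ⟨hdom, rs, hlen, hmem, hwr⟩ := ih (R ⧸ Ideal.span {x}) hdimeq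
    have hpr : (Ideal.span {x}).IsPrime := (Ideal.Quotient.isDomain_iff_prime _).1 hdom
    obtain ⟨q, hq, hqx⟩ := Ideal.exists_minimalPrimes_le (bot_le (a := Ideal.span {x}))
    have hqp : q.IsPrime := hq.1.1
    have hqb : q = ⊥ := by
      apply Submodule.eq_bot_of_le_smul_of_le_jacobson_bot (maximalIdeal R) _
              (IsNoetherian.noetherian _)
      · intro y hy
        obtain ⟨a, rfl⟩ := Ideal.mem_span_singleton'.1 (hqx hy)
        have ha : a ∈ q := (hqp.mem_or_mem hy).resolve_right (hxq q hq)
        rw [mul_comm]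
        exact Submodule.smul_mem_smul hx ha
      · exact (IsLocalRing.jacobson_eq_maximalIdeal ⊥ bot_ne_top).ge
    subst hqb
    have hD : IsDomain R := by
      have : NoZeroDivisors R := ⟨fun {a b} h => hqp.mem_or_mem h⟩
      exact NoZeroDivisors.to_isDomain R
    refine ⟨hD, ?_⟩
    obtain ⟨g, hg⟩ := (Ideal.Quotient.mk_surjective (I := Ideal.span {x})).hasRightInverse
    refine ⟨x :: rs.map g, by simp [hlen], ?_, ?_⟩
    · intro r hr
      rw [List.mem_cons, List.mem_map] at hr
      rcases hr with rfl | ⟨y, hy, rfl⟩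
      · exact hx
      · have := hmem y hy
        by_contra hcon
        have hu : IsUnit (g y) := by simpa using hcon
        have := hu.map (Ideal.Quotient.mk (Ideal.span {x}))
        rw [hg y] at this
        exact (hmem y hy) this
    · rw [isWeaklyRegular_cons_iff]
      have hx0 : x ≠ 0 := by rintro rfl; exact hx2 (Ideal.zero_mem _)
      refine ⟨IsSMulRegular.of_ne_zero hx0, ?_⟩
      have e : QuotSMulTop x R ≃ₗ[R] (R ⧸ Ideal.span {x}) :=
        Submodule.quotEquivOfEq _ _ (by
          rw [← Submodule.ideal_span_singleton_smul]; simp)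
      rw [e.isWeaklyRegular_congr, ← isWeaklyRegular_map_algebraMap_iff (R ⧸ Ideal.span {x})]
      rw [List.map_map]
      have : (algebraMap R (R ⧸ Ideal.span {x})) ∘ g = id := funext hg
      rw [this, List.map_id]
      exact hwr

end

section

open IsLocalRing RingTheory.Sequence
open CategoryTheory Abelian Limits in
theorem CMAux.hom_zero {R : Type} [CommRing R] (N : ModuleCat.{0} R) (rs : List R) :
    ∀ (M : ModuleCat.{0} R), IsWeaklyRegular M rs → (∀ j ≤ rs.length, Subsingleton (Ext N M j)) →
      Subsingleton (N →ₗ[R] (M ⧸ (Ideal.ofList rs • ⊤ : Submodule R M))) := by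
  induction rs with
  | nil =>
    intro M _ h
    have : Subsingleton (N ⟶ M) := Ext.addEquiv₀.subsingleton_congr.mp (h 0 le_rfl)
    have h1 : Subsingleton (N →ₗ[R] M) := ModuleCat.homAddEquiv.symm.subsingleton
    have e : (M ⧸ (Ideal.ofList ([] : List R) • ⊤ : Submodule R M)) ≃ₗ[R] M :=
      Submodule.quotEquivOfEqBot _ (by simp)
    exact ((e.congrRight (M := N)).toEquiv).subsingleton
  | cons x rs ih =>
    intro M hreg h
    rw [isWeaklyRegular_cons_iff] at hreg
    have := ih (ModuleCat.of R (QuotSMulTop x M)) hreg.2 (by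
      intro i hi
      have zero1 := AddCommGrpCat.isZero_of_iff_subsingleton.mpr (h i (by simp; omega))
      have zero2 := AddCommGrpCat.isZero_of_iff_subsingleton.mpr (h (i + 1) (by simp; omega))
      exact AddCommGrpCat.subsingleton_of_isZero <| ShortComplex.Exact.isZero_of_both_zeros
        ((Ext.covariant_sequence_exact₃' N hreg.1.smulShortComplex_shortExact) i (i + 1) rfl)
        (zero1.eq_zero_of_src _) (zero2.eq_zero_of_tgt _))
    exact (((Submodule.quotOfListConsSMulTopEquivQuotSMulTopInner M x rs).congrRight
      (M := N)).toEquiv).subsingleton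

/-- If a Noetherian local ring has an `R`-regular sequence of length `n` then a weakly regular
sequence `rs` in the maximal ideal of length `< n` is not maximal. -/
theorem CMAux.hom_zero_local {R : Type} [CommRing R] [IsLocalRing R] [IsNoetherianRing R]
    (ys : List R) (hys : IsWeaklyRegular R ys) (hym : ∀ r ∈ ys, r ∈ maximalIdeal R)
    (rs : List R) (hrs : IsWeaklyRegular R rs) 
    (hlt : rs.length < ys.length) (t : R)
    (ht : ∀ a ∈ maximalIdeal R, a * t ∈ Ideal.ofList rs) : t ∈ Ideal.ofList rs := by
  have hreg : IsRegular R ys :=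
    (IsLocalRing.isRegular_iff_isWeaklyRegular_of_subset_maximalIdeal (M := R) hym).2 hys
  have hext := ModuleCat.subsingleton_ext_of_exists_isRegular (maximalIdeal R)
    (ModuleCat.of R (R ⧸ maximalIdeal R)) (by
      rw [Module.support_eq_zeroLocus, Ideal.annihilator_quotient]) (ModuleCat.of R R)
    (by
      rw [lt_top_iff_ne_top]
      simpa using (maximalIdeal.isMaximal R).ne_top) ys hym hreg
  have h0 := CMAux.hom_zero (ModuleCat.of R (R ⧸ maximalIdeal R)) rs (ModuleCat.of R R) hrs
    (fun j hj => hext j (by omega))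
  let f : (R ⧸ maximalIdeal R) →ₗ[R] (R ⧸ (Ideal.ofList rs • ⊤ : Submodule R R)) :=
    Submodule.liftQ (maximalIdeal R)
      (LinearMap.toSpanSingleton R _ (Submodule.Quotient.mk t)) (by
        intro a ha
        rw [LinearMap.mem_ker, LinearMap.toSpanSingleton_apply, ← Submodule.Quotient.mk_smul,
          Submodule.Quotient.mk_eq_zero]
        simpa using ht a ha)
  have hf : f = 0 := Subsingleton.elim (h := h0) f 0
  have := congrArg (fun g => g (Submodule.Quotient.mk 1)) hf
  simp only [f, Submodule.liftQ_apply, LinearMap.toSpanSingleton_apply, one_smul,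
    LinearMap.zero_apply, Submodule.Quotient.mk_eq_zero] at this
  simpa using this

/-- Greedy construction. -/
theorem CMAux.exists_seq {B S : Type} [CommRing B] [IsLocalRing B] [IsNoetherianRing B]
    [CommRing S] [Algebra B S] [IsNoetherianRing S] (n : ℕ)
    (h : ∀ (Q : Ideal S) [Q.IsPrime], Q.comap (algebraMap B S) = maximalIdeal B →
      ∃ ys : List (Localization.AtPrime Q), ys.length = n ∧ (∀ y ∈ ys, y ∈ maximalIdeal _) ∧
        IsWeaklyRegular (Localization.AtPrime Q) ys) (i : ℕ) (hi : i ≤ n) :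
    ∃ rs : List B, rs.length = i ∧ (∀ r ∈ rs, r ∈ maximalIdeal B) ∧ IsWeaklyRegular S rs := by
  induction i with
  | zero => exact ⟨[], rfl, by simp, by simp⟩
  | succ i ih =>
    obtain ⟨rs, hlen, hmem, hreg⟩ := ih (by omega)
    set rs' : List S := rs.map (algebraMap B S) with hrs'
    have hreg' : IsWeaklyRegular S rs' := (isWeaklyRegular_map_algebraMap_iff S S rs).2 hreg
    by_cases hex : ∃ r ∈ maximalIdeal B, IsSMulRegular (S ⧸ (Ideal.ofList rs' : Ideal S)) r
    · obtain ⟨r, hr, hrr⟩ := hex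
      refine ⟨rs ++ [r], by simp [hlen], ?_, ?_⟩
      · intro y hy
        rw [List.mem_append, List.mem_singleton] at hy
        rcases hy with hy | rfl
        · exact hmem y hy
        · exact hr
      · rw [← isWeaklyRegular_map_algebraMap_iff S S, List.map_append,
          isWeaklyRegular_append_iff]
        refine ⟨hreg', ?_⟩
        rw [List.map_singleton, isWeaklyRegular_singleton_iff]
        have e : (S ⧸ (Ideal.ofList rs' • ⊤ : Submodule S S)) ≃ₗ[S] (S ⧸ (Ideal.ofList rs')) :=
          Submodule.quotEquivOfEq _ _ (by simp)
        rw [e.isSMulRegular_congr]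
        intro a b hab
        apply hrr
        simpa using hab
    · exfalso
      push Not at hex
      set J := Ideal.ofList rs' with hJ
      have hsub : (maximalIdeal B : Set B) ⊆
          ⋃ Q ∈ associatedPrimes S (S ⧸ J), ((Q.comap (algebraMap B S) : Ideal B) : Set B) := by
        intro r hr
        have h1 := hex r hr
        have h2 : algebraMap B S r ∈ ⋃ Q ∈ associatedPrimes S (S ⧸ J), (Q : Set S) := by
          rw [biUnion_associatedPrimes_eq_compl_regular]
          intro hcon
          apply h1
          intro a b hab
          apply hcon
          simpa using hab
        simpa using h2
      by_cases hne : (associatedPrimes S (S ⧸ J)).Nonempty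
      swap
      · rw [Set.not_nonempty_iff_eq_empty] at hne
        have := hsub (Ideal.zero_mem _)
        simp [hne] at this
      obtain ⟨Q0, hQ0⟩ := hne
      rw [Ideal.subset_union_prime_finite (associatedPrimes.finite S (S ⧸ J)) Q0 Q0] at hsub
      swap
      · intro Q hQ _ _
        have := IsAssociatedPrime.isPrime hQ
        infer_instance
      obtain ⟨Q, hQ, hle⟩ := hsub
      have hQp : Q.IsPrime := IsAssociatedPrime.isPrime hQ
      have hQm : Q.comap (algebraMap B S) = maximalIdeal B :=
        ((maximalIdeal.isMaximal B).eq_of_le (Ideal.IsPrime.ne_top inferInstance) hle).symm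
      obtain ⟨ys, hyl, hym, hyr⟩ := h Q hQm
      obtain ⟨_, t, ht⟩ := isAssociatedPrime_iff.1 hQ
      obtain ⟨t, rfl⟩ := Ideal.Quotient.mk_surjective t
      have htmem : ∀ a, a ∈ Q ↔ a * t ∈ J := by
        intro a
        rw [← Ideal.Quotient.eq_zero_iff_mem (I := J), map_mul, ht, Submodule.mem_colon_singleton]
        exact Iff.rfl
      have hloc : IsWeaklyRegular (Localization.AtPrime Q)
          (rs'.map (algebraMap S (Localization.AtPrime Q))) :=
        hreg'.of_isLocalization (Localization.AtPrime Q) Q.primeCompl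
      have hofl : Ideal.ofList (rs'.map (algebraMap S (Localization.AtPrime Q))) =
          J.map (algebraMap S (Localization.AtPrime Q)) := by
        rw [hJ, Ideal.map_ofList]
      have hz := CMAux.hom_zero_local ys hyr hym _ hloc (by simp [hrs', hlen, hyl]; omega)
        (algebraMap S _ t) (by
          intro a ha
          rw [hofl]
          obtain ⟨a, s, rfl⟩ := IsLocalization.exists_mk'_eq Q.primeCompl a
          have haQ : a ∈ Q := (IsLocalization.AtPrime.mk'_mem_maximal_iff _ Q a s).1 ha
          have : IsLocalization.mk' (Localization.AtPrime Q) a s * algebraMap S _ t =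
            IsLocalization.mk' (Localization.AtPrime Q) 1 s * algebraMap S _ (a * t) := by
            rw [map_mul, IsLocalization.mk'_eq_mul_mk'_one]
            ring
          rw [this]
          exact Ideal.mul_mem_left _ _ (Ideal.mem_map_of_mem _ ((htmem a).1 haQ)))
      rw [hofl, IsLocalization.algebraMap_mem_map_algebraMap_iff Q.primeCompl] at hz
      obtain ⟨m, hm, hmt⟩ := hz
      exact hm ((htmem m).2 hmt)

theorem CMAux.local_of_retract {B S : Type} [CommRing B] [IsLocalRing B] [IsNoetherianRing B]
    [CommRing S] [Algebra B S] [IsNoetherianRing S] (ρ : S →ₗ[B] B)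
    (hρ : ∀ b, ρ (algebraMap B S b) = b) (n : ℕ) (hn : ringKrullDim B = n)
    (h : ∀ (Q : Ideal S) [Q.IsPrime], Q.comap (algebraMap B S) = maximalIdeal B →
      ∃ ys : List (Localization.AtPrime Q), ys.length = n ∧ (∀ y ∈ ys, y ∈ maximalIdeal _) ∧
        IsWeaklyRegular (Localization.AtPrime Q) ys) :
    ∃ (n : ℕ) (rs : List B), ringKrullDim B = n ∧ rs.length = n ∧
    (∀ x ∈ rs, x ∈ maximalIdeal B) ∧ IsRegular B rs := by
  obtain ⟨rs, hlen, hmem, hreg⟩ := CMAux.exists_seq n h n le_rfl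
  refine ⟨n, rs, hn, hlen, hmem, ?_⟩
  rw [IsLocalRing.isRegular_iff_isWeaklyRegular_of_subset_maximalIdeal hmem]
  rw [isWeaklyRegular_iff] at hreg ⊢
  intro i hi
  have h1 := hreg i hi
  rw [isSMulRegular_quotient_iff_mem_of_smul_mem] at h1 ⊢
  intro x hx
  have h2 := h1 (algebraMap B S x) (by
    have h3 := Submodule.mem_map_of_mem (f := Algebra.linearMap B S) hx
    rw [Submodule.map_smul'', map_smul] at h3
    exact Submodule.smul_mono le_rfl le_top h3)
  have h4 := Submodule.mem_map_of_mem (f := ρ) h2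
  rw [Submodule.map_smul'', hρ] at h4
  exact Submodule.smul_mono le_rfl le_top h4

end

section

open IsLocalRing RingTheory.Sequence
theorem CMAux.global {B S : Type} [CommRing B] [IsNoetherianRing B] [CommRing S] [Algebra B S]
    [Module.Finite B S] [Algebra.HasGoingDown B S] (ρ : S →ₗ[B] B)
    (hρ : ∀ b, ρ (algebraMap B S b) = b)
    (hreg : ∀ (Q : Ideal S) [Q.IsPrime], IsRegularLocalRing (Localization.AtPrime Q))
    (P : Ideal B) [P.IsPrime] :
    ∃ (n : ℕ) (rs : List (Localization.AtPrime P)), ringKrullDim (Localization.AtPrime P) = n ∧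
      rs.length = n ∧ (∀ x ∈ rs, x ∈ maximalIdeal (Localization.AtPrime P)) ∧
      IsRegular (Localization.AtPrime P) rs := by
  have hSn : IsNoetherianRing S := IsNoetherianRing.of_finite B S
  let B' := Localization.AtPrime P
  let S' := Localization (Algebra.algebraMapSubmonoid S P.primeCompl)
  have : Module.Finite B' S' := Module.Finite.of_isLocalization B S P.primeCompl
  have hSn' : IsNoetherianRing S' := IsLocalization.isNoetherianRing
    (Algebra.algebraMapSubmonoid S P.primeCompl) S' hSn
  have i1 : IsLocalizedModule P.primeCompl (IsScalarTower.toAlgHom B S S').toLinearMap :=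
    isLocalizedModule_iff_isLocalization.2 inferInstance
  let ρ' : S' →ₗ[B'] B' := IsLocalizedModule.mapExtendScalars P.primeCompl
    (IsScalarTower.toAlgHom B S S').toLinearMap (Algebra.linearMap B B') B' ρ
  have hρ1 : ρ' 1 = 1 := by
    have := IsLocalizedModule.map_apply P.primeCompl (IsScalarTower.toAlgHom B S S').toLinearMap
      (Algebra.linearMap B B') ρ 1
    have h2 := hρ 1
    rw [map_one] at h2
    rw [h2] at this
    simp only [AlgHom.toLinearMap_apply, map_one, Algebra.linearMap_apply] at this
    exact this
  have hρ' : ∀ b, ρ' (algebraMap B' S' b) = b := by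
    intro b
    rw [Algebra.algebraMap_eq_smul_one, map_smul, hρ1, smul_eq_mul, mul_one]
  have hfin : ∃ n : ℕ, P.height = n := ENat.ne_top_iff_exists.1 (Ideal.height_ne_top_of_isPrime) |>.imp fun _ h => h.symm
  obtain ⟨n, hn⟩ := hfin
  refine CMAux.local_of_retract ρ' hρ' n
    (by rw [IsLocalization.AtPrime.ringKrullDim_eq_height P, hn]; rfl) ?_
  intro Q' _ hQ'
  set Q := Q'.comap (algebraMap S S') with hQ
  have i2 : IsLocalization.AtPrime (Localization.AtPrime Q') Q :=
    IsLocalization.isLocalization_isLocalization_atPrime_isLocalization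
      (Algebra.algebraMapSubmonoid S P.primeCompl) _ Q'
  have hr : IsRegularLocalRing (Localization.AtPrime Q') := by
    have := hreg Q
    exact IsRegularLocalRing.of_ringEquiv
      (IsLocalization.algEquiv Q.primeCompl (Localization.AtPrime Q) (Localization.AtPrime Q')).toRingEquiv
  have hlo : Q.LiesOver P := by
    constructor
    rw [Ideal.under_def, hQ, Ideal.comap_comap, ← IsScalarTower.algebraMap_eq B S S',
      IsScalarTower.algebraMap_eq B B' S', ← Ideal.comap_comap, hQ']
    exact (IsLocalization.AtPrime.under_maximalIdeal B' P).symm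
  have hh := Ideal.height_eq_height_add_of_liesOver_of_hasGoingDown P Q
  obtain ⟨m, hm⟩ : ∃ n : ℕ, Q.height = n := ENat.ne_top_iff_exists.1 (Ideal.height_ne_top_of_isPrime) |>.imp fun _ h => h.symm
  have hle : n ≤ m := by
    have : P.height ≤ Q.height := by rw [hh]; exact le_self_add
    rw [hn, hm] at this
    exact_mod_cast this
  obtain ⟨-, rs, hlen, hmem, hw⟩ := RegAux.main m (Localization.AtPrime Q')
    (by rw [IsLocalization.AtPrime.ringKrullDim_eq_height Q, hm]; rfl)
  refine ⟨rs.take n, by simp [hlen, hle], fun y hy => hmem y (List.mem_of_mem_take hy), ?_⟩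
  rw [← List.take_append_drop n rs, isWeaklyRegular_append_iff] at hw
  exact hw.1

end

section

open IsLocalRing RingTheory.Sequence

open scoped Pointwise in
theorem InvAux.goingDown {B S R G : Type} [CommRing B] [CommRing S] [CommRing R] [Algebra B S]
    [Algebra B R] [Algebra S R] [IsScalarTower B S R] [Group G] [Finite G]
    [MulSemiringAction G R] [Algebra.IsInvariant B R G] [SMulCommClass G B R]
    (hinj : Function.Injective (algebraMap S R)) (hinjB : Function.Injective (algebraMap B R)) :
    Algebra.HasGoingDown B S := by
  have hB : Algebra.IsIntegral B R := Algebra.IsInvariant.isIntegral B R G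
  have hS : Algebra.IsIntegral S R := Algebra.IsIntegral.tower_top (R := B)
  constructor
  intro p _ Q _ hlt
  obtain ⟨QR, -, hQRp, hQR⟩ := Ideal.exists_ideal_over_prime_of_isIntegral (S := R) Q ⊥ (by
    intro x hx
    have : x = 0 := hinj (by simpa using hx)
    rw [this]; exact Q.zero_mem)
  obtain ⟨Q1, -, hQ1p, hQ1⟩ := Ideal.exists_ideal_over_prime_of_isIntegral (S := R) p ⊥ (by
    intro x hx
    have : x = 0 := hinjB (by simpa using hx)
    rw [this]; exact p.zero_mem)
  obtain ⟨Q2, hQ12, hQ2p, hQ2⟩ := Ideal.exists_ideal_over_prime_of_isIntegral (S := R)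
    (Q.under B) Q1 (hQ1.le.trans hlt.le)
  obtain ⟨g, hg⟩ := Algebra.IsInvariant.exists_smul_of_under_eq B R G Q2 QR (by
    rw [Ideal.under_def, hQ2, Ideal.under_def, Ideal.under_def, ← hQR, Ideal.comap_comap,
      ← IsScalarTower.algebraMap_eq])
  have hp : (g • Q1).IsPrime := inferInstance
  refine ⟨(g • Q1).comap (algebraMap S R), ?_, inferInstance, ⟨?_⟩⟩
  · rw [← hQR, hg]
    exact Ideal.comap_mono (Ideal.pointwise_smul_le_pointwise_smul_iff.2 hQ12)
  · ext x
    rw [← hQ1, Ideal.mem_comap, Ideal.under_def, Ideal.mem_comap, Ideal.mem_comap,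
      ← IsScalarTower.algebraMap_apply, Ideal.mem_pointwise_smul_iff_inv_smul_mem,
      smul_algebraMap]

theorem InvAux.retract {B S R G : Type} [CommRing B] [CommRing S] [CommRing R] [Algebra B S]
    [Algebra B R] [Algebra S R] [IsScalarTower B S R] [Group G] [Finite G]
    [MulSemiringAction G R] [Algebra.IsInvariant B R G] [SMulCommClass G B R]
    (hinjB : Function.Injective (algebraMap B R)) (H : Subgroup G)
    (hH : ∀ h ∈ H, ∀ s : S, h • algebraMap S R s = algebraMap S R s)
    (u : B) (hu : u * (H.index : B) = 1) :
    ∃ ρ : S →ₗ[B] B, ∀ b, ρ (algebraMap B S b) = b := by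
  classical
  have : Fintype (G ⧸ H) := Fintype.ofFinite _
  let T : S →ₗ[B] R :=
    { toFun := fun s => ∑ c : G ⧸ H, c.out • algebraMap S R s
      map_add' := by
        intro x y
        simp [Finset.sum_add_distrib]
      map_smul' := by
        intro b x
        rw [RingHom.id_apply, Finset.smul_sum]
        refine Finset.sum_congr rfl fun c _ => ?_
        rw [Algebra.smul_def, map_mul, ← IsScalarTower.algebraMap_apply, smul_mul', smul_algebraMap,
          ← Algebra.smul_def] }
  have hout : ∀ (g : G) (s : S), ((g : G ⧸ H).out) • algebraMap S R s = g • algebraMap S R s := by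
    intro g s
    obtain ⟨h, hh⟩ := QuotientGroup.mk_out_eq_mul H g
    rw [hh, mul_smul, hH _ h.2]
  have hT : ∀ s, T s ∈ LinearMap.range (Algebra.linearMap B R) := by
    intro s
    apply Algebra.IsInvariant.isInvariant (G := G)
    intro g
    change g • (∑ c : G ⧸ H, c.out • algebraMap S R s) = ∑ c : G ⧸ H, c.out • algebraMap S R s
    rw [Finset.smul_sum]
    conv_rhs => rw [← Equiv.sum_comp (MulAction.toPerm g : Equiv.Perm (G ⧸ H))]
    refine Finset.sum_congr rfl fun c _ => ?_
    rw [← mul_smul, ← hout]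
    congr 2
    change _ = g • c
    conv_rhs => rw [← QuotientGroup.out_eq' c]
    rfl
  let e := LinearEquiv.ofInjective (Algebra.linearMap B R) hinjB
  let T' := e.symm.toLinearMap ∘ₗ T.codRestrict _ hT
  have hT' : ∀ s, algebraMap B R (T' s) = T s := by
    intro s
    have := LinearEquiv.apply_symm_apply e (T.codRestrict _ hT s)
    exact congrArg Subtype.val this
  refine ⟨u • T', fun b => ?_⟩
  have h1 : T' (algebraMap B S b) = (H.index : B) * b := by
    apply hinjB
    rw [hT']
    change ∑ c : G ⧸ H, c.out • algebraMap S R (algebraMap B S b) = _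
    simp_rw [← IsScalarTower.algebraMap_apply, smul_algebraMap]
    rw [Finset.sum_const, Finset.card_univ, map_mul, map_natCast, nsmul_eq_mul, Subgroup.index,
      Nat.card_eq_fintype_card]
  rw [LinearMap.smul_apply, h1, smul_eq_mul, ← mul_assoc, hu, one_mul]

theorem InvAux.main {A B S R G : Type} [CommRing A] [IsNoetherianRing A] [CommRing B] [CommRing S]
    [CommRing R] [Algebra A B] [Algebra A R] [Algebra.FiniteType A R]
    [Algebra B S] [Algebra B R] [Algebra S R] [IsScalarTower B S R] [Group G] [Finite G]
    [MulSemiringAction G R] [Algebra.IsInvariant B R G] [SMulCommClass G B R]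
    [IsScalarTower A B R]
    (hinj : Function.Injective (algebraMap S R))
    (hinjB : Function.Injective (algebraMap B R)) (H : Subgroup G)
    (hH : ∀ h ∈ H, ∀ s : S, h • algebraMap S R s = algebraMap S R s)
    (u : B) (hu : u * (H.index : B) = 1)
    (hreg : ∀ (Q : Ideal S) [Q.IsPrime], IsRegularLocalRing (Localization.AtPrime Q)) :
    IsNoetherianRing B ∧ ∀ (P : Ideal B) (_ : P.IsPrime),
    ∃ (n : ℕ) (rs : List (Localization.AtPrime P)), ringKrullDim (Localization.AtPrime P) = n ∧
      rs.length = n ∧ (∀ x ∈ rs, x ∈ maximalIdeal (Localization.AtPrime P)) ∧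
      IsRegular (Localization.AtPrime P) rs := by
  have hB : Algebra.IsIntegral B R := Algebra.IsInvariant.isIntegral B R G
  have hft : Algebra.FiniteType B R := Algebra.FiniteType.of_restrictScalars_finiteType A B R
  have hfin : Module.Finite B R := Algebra.IsIntegral.finite
  have hBft : Algebra.FiniteType A B := ⟨fg_of_fg_of_fg A B R Algebra.FiniteType.out
    Module.Finite.fg_top hinjB⟩
  have hBn : IsNoetherianRing B := Algebra.FiniteType.isNoetherianRing A B
  have hSfin : Module.Finite B S := 
    Module.Finite.of_injective (IsScalarTower.toAlgHom B S R).toLinearMap hinj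
  have := InvAux.goingDown (G := G) hinj hinjB
  obtain ⟨ρ, hρ⟩ := InvAux.retract hinjB H hH u hu
  exact ⟨hBn, fun P _ => CMAux.global ρ hρ hreg P⟩

end

section

open Polynomial

theorem PolyAux.norm_comp {D H : Type} [CommRing D] [Group H] [Fintype H]
    (δ : H → D) (hadd : ∀ g h, δ (g * h) = δ g + δ h) (h : H) :
    (∏ g : H, (X + C (δ g))).comp (X + C (δ h)) = ∏ g : H, (X + C (δ g)) := by
  rw [Polynomial.prod_comp]
  conv_rhs => rw [← Equiv.prod_comp (Equiv.mulLeft h)]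
  refine Finset.prod_congr rfl fun g _ => ?_
  simp [hadd, add_assoc]

theorem PolyAux.invariant {D H : Type} [CommRing D] [IsDomain D] [Group H] [Fintype H]
    (δ : H → D) (hadd : ∀ g h, δ (g * h) = δ g + δ h) (hinj : Function.Injective δ) (n : ℕ) :
    ∀ f : D[X], f.natDegree ≤ n → (∀ g, f.comp (X + C (δ g)) = f) →
    ∃ q : D[X], q.comp (∏ g : H, (X + C (δ g))) = f := by
  classical
  set N := ∏ g : H, (X + C (δ g)) with hN
  have hmon : N.Monic := Polynomial.monic_prod_of_monic _ _ fun g _ => monic_X_add_C _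
  have hdeg : N.natDegree = Fintype.card H := by
    rw [hN, Polynomial.natDegree_prod_of_monic _ _ fun g _ => monic_X_add_C _]
    simp
  have hcard : 0 < Fintype.card H := Fintype.card_pos
  have hδ1 : δ 1 = 0 := by
    have := hadd 1 1
    rw [mul_one] at this
    simpa using this
  have small : ∀ r : D[X], r.natDegree < Fintype.card H → (∀ g, r.comp (X + C (δ g)) = r) →
      r = C (r.eval 0) := by
    intro r hr hinv
    have h0 : ∀ g, r.eval (δ g) = r.eval 0 := by
      intro g
      have := congrArg (Polynomial.eval 0) (hinv g)
      simpa using this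
    have := Polynomial.eq_zero_of_natDegree_lt_card_of_eval_eq_zero (r - C (r.eval 0)) hinj
      (by intro g; simp [h0]) (by rwa [Polynomial.natDegree_sub_C])
    exact sub_eq_zero.1 this
  induction n using Nat.strong_induction_on with
  | _ n ih =>
  intro f hf hinv
  by_cases hlt : f.natDegree < Fintype.card H
  · exact ⟨C (f.eval 0), by rw [C_comp]; exact (small f hlt hinv).symm⟩
  have hinv2 : ∀ g, (f /ₘ N).comp (X + C (δ g)) = f /ₘ N ∧ (f %ₘ N).comp (X + C (δ g)) = f %ₘ N := by
    intro g
    have := Polynomial.div_modByMonic_unique (f := f) ((f /ₘ N).comp (X + C (δ g)))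
      ((f %ₘ N).comp (X + C (δ g))) hmon ⟨by
        rw [← hinv g]
        conv_rhs => rw [← Polynomial.modByMonic_add_div f N]
        rw [add_comp, mul_comp, PolyAux.norm_comp δ hadd, hinv g], by
        have h1 := Polynomial.degree_modByMonic_lt f hmon
        by_cases hz : f %ₘ N = 0
        · rw [hz] at h1 ⊢; simpa using h1
        rw [Polynomial.degree_eq_natDegree hmon.ne_zero] at h1 ⊢
        rw [← Polynomial.natDegree_lt_iff_degree_lt hz] at h1
        refine lt_of_le_of_lt Polynomial.degree_le_natDegree ?_
        rw [Polynomial.natDegree_comp, natDegree_X_add_C, mul_one]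
        exact_mod_cast h1⟩
    exact ⟨this.1.symm, this.2.symm⟩
  obtain ⟨q, hq⟩ := ih (f.natDegree - Fintype.card H) (by omega) (f /ₘ N)
    (by rw [Polynomial.natDegree_divByMonic f hmon, hdeg]) (fun g => (hinv2 g).1)
  have hr := small (f %ₘ N) (by
    rw [← hdeg]
    exact Polynomial.natDegree_modByMonic_lt f hmon (by
      intro h; rw [h] at hdeg; simp at hdeg; omega)) (fun g => (hinv2 g).2)
  refine ⟨C ((f %ₘ N).eval 0) + X * q, ?_⟩
  rw [add_comp, mul_comp, C_comp, X_comp, hq, ← hr, Polynomial.modByMonic_add_div f N]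

end

section

open Polynomial

theorem PolyAux.psi {A : Type} [CommRing A] [IsDomain A] (i j : Fin 2) (hij : i ≠ j) (s c : A)
    (hs : s ≠ 0) :
    ∃ ψ : A[X][X] →+* MvPolynomial (Fin 2) A, Function.Injective ψ ∧
      (∀ a, ψ (C (C a)) = MvPolynomial.C a) ∧
      ψ (C X) = s • MvPolynomial.X i + c • MvPolynomial.X j ∧
      ψ X = s • MvPolynomial.X j ∧
      ∀ f, ∃ (k : ℕ) (p : A[X][X]), ψ p = s ^ k • f := by
  classical
  set x : MvPolynomial (Fin 2) A := s • MvPolynomial.X i + c • MvPolynomial.X j with hx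
  set z : MvPolynomial (Fin 2) A := s • MvPolynomial.X j with hz
  let ψ : A[X][X] →+* MvPolynomial (Fin 2) A :=
    eval₂RingHom (aeval x : A[X] →ₐ[A] MvPolynomial (Fin 2) A).toRingHom z
  have h1 : ∀ a, ψ (C (C a)) = MvPolynomial.C a := by
    intro a
    simp [ψ, MvPolynomial.algebraMap_eq]
  have h2 : ψ (C X) = x := by simp [ψ]
  have h3 : ψ X = z := by simp [ψ]
  have h1' : ∀ (a : A) (p), ψ (C (C a) * p) = a • ψ p := by
    intro a p
    rw [map_mul, h1, MvPolynomial.smul_eq_C_mul]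
  refine ⟨ψ, ?_, h1, h2, h3, ?_⟩
  · let θ : MvPolynomial (Fin 2) A →ₐ[A] A[X][X] :=
      MvPolynomial.aeval (fun k => if k = i then s • C X - c • X else s • X)
    have t1 : θ x = s ^ 2 • C X := by
      simp only [θ, hx, map_add, map_smul, MvPolynomial.aeval_X, if_true, if_neg hij.symm]
      module
    have t2 : θ z = s ^ 2 • X := by
      simp only [θ, hz, map_smul, MvPolynomial.aeval_X, if_neg hij.symm]
      module
    let κ : A[X] →+* A[X] := compRingHom (C (s ^ 2) * X)
    have hκ : Function.Injective κ := by
      rw [injective_iff_map_eq_zero]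
      intro p hp
      ext n
      have := congrArg (fun q => coeff q n) hp
      simpa [κ, hs, -map_pow, -map_mul] using this
    have hcomp : θ.toRingHom.comp ψ =
        (compRingHom (C (C (s ^ 2)) * X)).comp (mapRingHom κ) := by
      apply Polynomial.ringHom_ext'
      · apply Polynomial.ringHom_ext
        · intro a
          simp [h1, κ]
        · simp [h2, t1, κ]
          simp [smul_eq_C_mul]
      · simp [h3, t2]
        rw [Algebra.smul_def]
        simp [Polynomial.algebraMap_apply]
    have hinj : Function.Injective (θ.toRingHom.comp ψ) := by
      rw [hcomp, RingHom.coe_comp]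
      refine Function.Injective.comp ?_ (map_injective κ hκ)
      rw [injective_iff_map_eq_zero]
      intro p hp
      ext1 n
      have := congrArg (fun q => coeff q n) hp
      simpa [hs, -map_pow, -map_mul] using this
    rw [RingHom.coe_comp] at hinj
    exact hinj.of_comp
  · intro f
    induction f using MvPolynomial.induction_on with
    | C a => exact ⟨0, C (C a), by simp [h1]⟩
    | add f g hf hg =>
      obtain ⟨k, p, hp⟩ := hf
      obtain ⟨l, q, hq⟩ := hg
      refine ⟨k + l, C (C (s ^ l)) * p + C (C (s ^ k)) * q, ?_⟩
      rw [map_add, h1', h1', hp, hq, smul_smul, smul_smul, smul_add, pow_add, mul_comm]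
    | mul_X f m hf =>
      obtain ⟨k, p, hp⟩ := hf
      have hm : m = i ∨ m = j := by omega
      rcases hm with rfl | rfl
      · refine ⟨k + 2, p * (C (C s) * C X - C (C c) * X), ?_⟩
        rw [map_mul, hp, map_sub, h1', h1', h2, h3]
        simp only [MvPolynomial.smul_eq_C_mul, hx, hz, map_pow]
        ring
      · refine ⟨k + 1, p * X, ?_⟩
        rw [map_mul, hp, h3]
        simp only [MvPolynomial.smul_eq_C_mul, hz, map_pow]
        ring

theorem PolyAux.phi {A H : Type} [CommRing A] [IsDomain A] [Group H] [Finite H]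
    (σ : H → (MvPolynomial (Fin 2) A →ₐ[A] MvPolynomial (Fin 2) A))
    (S : Subalgebra A (MvPolynomial (Fin 2) A)) (hS : ∀ f, f ∈ S ↔ ∀ g, σ g f = f)
    (i j : Fin 2) (hij : i ≠ j) (s c : A) (hs : s ≠ 0) (γ : H → A)
    (hadd : ∀ g h, γ (g * h) = γ g + γ h) (hinj : Function.Injective γ)
    (hx : ∀ g, σ g (s • MvPolynomial.X i + c • MvPolynomial.X j) =
      s • MvPolynomial.X i + c • MvPolynomial.X j)
    (hz : ∀ g, σ g (s • MvPolynomial.X j) =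
      s • MvPolynomial.X j + γ g • (s • MvPolynomial.X i + c • MvPolynomial.X j)) :
    ∃ φ : A[X][X] →+* S, Function.Injective φ ∧ (∀ a, φ (C (C a)) = algebraMap A S a) ∧
      ∀ f : S, ∃ (k : ℕ) (p : A[X][X]), φ p = s ^ k • f := by
  classical
  have : Fintype H := Fintype.ofFinite H
  obtain ⟨ψ, hψinj, h1, h2, h3, h4⟩ := PolyAux.psi i j hij s c hs
  set x : MvPolynomial (Fin 2) A := s • MvPolynomial.X i + c • MvPolynomial.X j with hxdef
  let δ : H → A[X] := fun g => C (γ g) * X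
  have hδadd : ∀ g h, δ (g * h) = δ g + δ h := by
    intro g h
    simp [δ, hadd, add_mul]
  have hδinj : Function.Injective δ := by
    intro g h hgh
    apply hinj
    have := congrArg (fun q => coeff q 1) hgh
    simpa [δ] using this
  have heq : ∀ g p, σ g (ψ p) = ψ (p.comp (X + C (δ g))) := by
    intro g p
    have : (σ g).toRingHom.comp ψ = ψ.comp (compRingHom (X + C (δ g))) := by
      apply Polynomial.ringHom_ext'
      · apply Polynomial.ringHom_ext
        · intro a
          simp only [RingHom.coe_comp, Function.comp_apply, AlgHom.toRingHom_eq_coe, RingHom.coe_coe,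
            h1, coe_compRingHom_apply, C_comp]
          exact (σ g).commutes a
        · simp [h2, hx]
      · simp only [RingHom.coe_comp, Function.comp_apply, AlgHom.toRingHom_eq_coe, RingHom.coe_coe,
          h3, hz, coe_compRingHom_apply, X_comp, map_add, δ, map_mul, h1, h2]
        rw [MvPolynomial.smul_eq_C_mul x]
    exact congrArg (fun F => F p) this
  set N := ∏ g : H, (X + C (δ g)) with hN
  have hmon : N.Monic := Polynomial.monic_prod_of_monic _ _ fun g _ => monic_X_add_C _
  have hdeg : N.natDegree = Fintype.card H := by
    rw [hN, Polynomial.natDegree_prod_of_monic _ _ fun g _ => monic_X_add_C _]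
    simp
  have hcard : 0 < Fintype.card H := Fintype.card_pos
  have hmem : ∀ p, (ψ.comp (compRingHom N)) p ∈ S.toSubring := by
    intro p
    rw [Subalgebra.mem_toSubring, hS]
    intro g
    simp only [RingHom.coe_comp, Function.comp_apply, coe_compRingHom_apply]
    rw [heq, comp_assoc, PolyAux.norm_comp δ hδadd]
  let φ : A[X][X] →+* S := (ψ.comp (compRingHom N)).codRestrict S.toSubring hmem
  have hφ : ∀ p, (φ p : MvPolynomial (Fin 2) A) = ψ (p.comp N) := fun p => rfl
  refine ⟨φ, ?_, ?_, ?_⟩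
  · rw [injective_iff_map_eq_zero]
    intro p hp
    have h5 : ψ (p.comp N) = 0 := by rw [← hφ, hp]; rfl
    have h6 := (map_eq_zero_iff ψ hψinj).1 h5
    rw [comp_eq_zero_iff] at h6
    rcases h6 with h6 | h6
    · exact h6
    · rw [h6.2, natDegree_C] at hdeg
      omega
  · intro a
    apply Subtype.ext
    rw [hφ, C_comp, h1]
    rfl
  · intro f
    obtain ⟨k, p, hp⟩ := h4 f
    have hinv : ∀ g, p.comp (X + C (δ g)) = p := by
      intro g
      apply hψinj
      rw [← heq, hp, map_smul, (hS f).1 f.2 g]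
    obtain ⟨q, hq⟩ := PolyAux.invariant δ hδadd hδinj p.natDegree p le_rfl hinv
    refine ⟨k, q, ?_⟩
    apply Subtype.ext
    rw [hφ, hq, hp]
    rfl

theorem PolyAux.regular {A H : Type} [CommRing A] [IsDomain A] [IsRegularRing A]
    [Group H] [Finite H]
    (σ : H → (MvPolynomial (Fin 2) A →ₐ[A] MvPolynomial (Fin 2) A))
    (S : Subalgebra A (MvPolynomial (Fin 2) A)) (hS : ∀ f, f ∈ S ↔ ∀ g, σ g f = f)
    (i j : Fin 2) (hij : i ≠ j) (s c : A) (hs : s ≠ 0) (γ : H → A)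
    (hadd : ∀ g h, γ (g * h) = γ g + γ h) (hinj : Function.Injective γ)
    (hx : ∀ g, σ g (s • MvPolynomial.X i + c • MvPolynomial.X j) =
      s • MvPolynomial.X i + c • MvPolynomial.X j)
    (hz : ∀ g, σ g (s • MvPolynomial.X j) =
      s • MvPolynomial.X j + γ g • (s • MvPolynomial.X i + c • MvPolynomial.X j))
    (Q : Ideal S) [Q.IsPrime] (hsQ : algebraMap A S s ∉ Q) :
    IsRegularLocalRing (Localization.AtPrime Q) := by
  obtain ⟨φ, hφ, h1, h2⟩ := PolyAux.phi σ S hS i j hij s c hs γ hadd hinj hx hz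
  let P := Q.comap φ
  have hP : P.IsPrime := inferInstance
  let alg : Algebra A[X][X] (Localization.AtPrime Q) :=
    ((algebraMap S (Localization.AtPrime Q)).comp φ).toAlgebra
  have halg : ∀ p, algebraMap A[X][X] (Localization.AtPrime Q) p =
    algebraMap S (Localization.AtPrime Q) (φ p) := fun p => rfl
  have hsk : ∀ k, algebraMap A S s ^ k ∉ Q := fun k hk => hsQ (Ideal.IsPrime.mem_of_pow_mem ‹_› k hk)
  have hloc : IsLocalization.AtPrime (Localization.AtPrime Q) P := by
    refine (isLocalization_iff _ _).2 ⟨?_, ?_, ?_⟩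
    · rintro ⟨y, hy⟩
      exact IsLocalization.map_units (Localization.AtPrime Q) (⟨φ y, hy⟩ : Q.primeCompl)
    · intro w
      obtain ⟨⟨f, t⟩, hft⟩ := IsLocalization.surj Q.primeCompl w
      obtain ⟨k, p, hp⟩ := h2 f
      obtain ⟨l, q, hq⟩ := h2 t
      rw [Algebra.smul_def, map_pow] at hp hq
      have hden : φ (C (C s) ^ k * q) = algebraMap A S s ^ (k + l) * t := by
        rw [map_mul, map_pow, h1, hq, pow_add]
        ring
      have hnum : φ (C (C s) ^ l * p) = algebraMap A S s ^ (k + l) * f := by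
        rw [map_mul, map_pow, h1, hp, pow_add]
        ring
      refine ⟨⟨C (C s) ^ l * p, ⟨C (C s) ^ k * q, ?_⟩⟩, ?_⟩
      · change ¬ (φ _ ∈ Q)
        rw [hden]
        exact Q.primeCompl.mul_mem (hsk _) t.2
      · dsimp only at hft ⊢
        rw [halg, halg, hden, hnum, map_mul, map_mul, ← hft]
        ring
    · intro y z hyz
      rw [halg, halg] at hyz
      have hdom : Function.Injective (algebraMap S (Localization.AtPrime Q)) :=
        IsLocalization.injective (Localization.AtPrime Q) Q.primeCompl_le_nonZeroDivisors
      exact ⟨1, by rw [hφ (hdom hyz)]⟩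
  have hR : IsRegularRing A[X][X] := inferInstance
  have : IsRegularLocalRing (Localization.AtPrime P) := inferInstance
  have e := IsLocalization.algEquiv P.primeCompl (Localization.AtPrime P) (Localization.AtPrime Q)
  exact IsRegularLocalRing.of_ringEquiv (R := Localization.AtPrime P)
    (R' := Localization.AtPrime Q) e.toRingEquiv

end

section

theorem FixAux.fixed_aux {M H : Type} [AddCommGroup M] [Nontrivial M] [Group H] [Finite H]
    [DistribMulAction H M] (p : ℕ) [Fact p.Prime] [Module (ZMod p) M] (hp : ∀ x : M, p • x = 0) (hH : IsPGroup p H) :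
    ∃ v : M, v ≠ 0 ∧ ∀ h : H, h • v = v := by
  classical
  obtain ⟨x, hx⟩ := exists_ne (0 : M)
  let W : Submodule (ZMod p) M := Submodule.span (ZMod p) (Set.range fun h : H => h • x)
  have hfin : Module.Finite (ZMod p) ↥W := by
    exact Module.Finite.span_of_finite (ZMod p) (Set.finite_range _)
  have hfinite : Finite W := Module.finite_of_finite (ZMod p)
  have hst : ∀ (h : H), ∀ w ∈ W, h • w ∈ W := by
    intro h w hw
    induction hw using Submodule.span_induction with
    | mem y hy =>
      obtain ⟨k, rfl⟩ := hy
      exact Submodule.subset_span ⟨h * k, mul_smul h k x⟩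
    | zero => rw [smul_zero]; exact W.zero_mem
    | add a b _ _ ha hb => rw [smul_add]; exact W.add_mem ha hb
    | smul c a _ ha =>
      have := ZMod.map_smul (DistribSMul.toAddMonoidHom M h) c a
      simp only [DistribSMul.toAddMonoidHom_apply] at this
      rw [this]
      exact W.smul_mem _ ha
  let act : MulAction H W :=
    { smul := fun h w => ⟨h • (w : M), hst h w w.2⟩
      one_smul := fun w => Subtype.ext (one_smul H (w : M))
      mul_smul := fun g h w => Subtype.ext (mul_smul g h (w : M)) }
  have hxW : x ∈ W := Submodule.subset_span ⟨1, one_smul H x⟩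
  have hdvd : p ∣ Nat.card W := by
    have h1 : addOrderOf (⟨x, hxW⟩ : W) = p :=
      addOrderOf_eq_prime (Subtype.ext (hp x)) (fun h => hx (congrArg Subtype.val h))
    exact h1.symm.dvd.trans (addOrderOf_dvd_natCard _)
  obtain ⟨b, hb, hb0⟩ := hH.exists_fixed_point_of_prime_dvd_card_of_fixed_point W hdvd
    (a := (0 : W)) (fun h => Subtype.ext (smul_zero h))
  refine ⟨b, fun h => hb0 (Subtype.ext h.symm), fun h => congrArg Subtype.val (hb h)⟩

theorem FixAux.fixed {M H : Type} [AddCommGroup M] [Nontrivial M] [Group H] [Finite H]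
    [DistribMulAction H M] (p : ℕ) [Fact p.Prime] (hp : ∀ x : M, p • x = 0) (hH : IsPGroup p H) :
    ∃ v : M, v ≠ 0 ∧ ∀ h : H, h • v = v :=
  @FixAux.fixed_aux M H _ _ _ _ _ p _ (AddCommGroup.zmodModule hp) hp hH

open Matrix in
theorem FixAux.vec {A : Type} [CommRing A] [Nontrivial A] (p : ℕ) [Fact p.Prime] [CharP A p]
    (H : Subgroup (GL (Fin 2) A)) [Finite H] (hH : IsPGroup p H) :
    ∃ v : Fin 2 → A, v ≠ 0 ∧ ∀ h ∈ H, v ᵥ* (h : Matrix (Fin 2) (Fin 2) A) = v := by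
  let f : H →* AddMonoid.End (Fin 2 → A) :=
    { toFun := fun h => (Matrix.vecMulLinear ((h⁻¹ : H) : GL (Fin 2) A).val).toAddMonoidHom
      map_one' := by
        refine AddMonoidHom.ext fun v => ?_
        change v ᵥ* (((1 : H)⁻¹ : H) : GL (Fin 2) A).val = v
        simp
      map_mul' := by
        intro g h
        refine AddMonoidHom.ext fun v => ?_
        change v ᵥ* (((g * h : H)⁻¹ : H) : GL (Fin 2) A).val =
          (v ᵥ* ((h⁻¹ : H) : GL (Fin 2) A).val) ᵥ* ((g⁻¹ : H) : GL (Fin 2) A).val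
        rw [Matrix.vecMul_vecMul, _root_.mul_inv_rev]
        rfl }
  let inst := DistribMulAction.compHom (Fin 2 → A) f
  obtain ⟨v, hv, hfix⟩ := FixAux.fixed (M := Fin 2 → A) (H := H) p (by
    intro x
    ext k
    simp) hH
  refine ⟨v, hv, fun h hh => ?_⟩
  have := hfix (⟨h, hh⟩⁻¹)
  change v ᵥ* ((((⟨h, hh⟩ : H)⁻¹)⁻¹ : H) : GL (Fin 2) A).val = v at this
  rwa [inv_inv] at this

theorem FixAux.ratio {A : Type} [CommRing A] [IsDedekindDomain A] (P : Ideal A) [P.IsPrime]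
    (v : Fin 2 → A) (hv : v ≠ 0) :
    ∃ (i j : Fin 2) (s c : A), i ≠ j ∧ s ∉ P ∧ v i ≠ 0 ∧ s * v j = c * v i := by
  have hv' : ∃ i, v i ≠ 0 := by
    by_contra! h
    exact hv (funext h)
  by_cases hP : P = ⊥
  · obtain ⟨i, hi⟩ := hv'
    refine ⟨i, 1 - i, v i, v (1 - i), by fin_cases i <;> simp, by simpa [hP] using hi, hi, ?_⟩
    ring
  · have hD : IsDiscreteValuationRing (Localization.AtPrime P) :=
      IsLocalization.AtPrime.isDiscreteValuationRing_of_dedekind_domain A hP _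
    have key : ∀ i j : Fin 2, i ≠ j → algebraMap A (Localization.AtPrime P) (v i) ∣
        algebraMap A (Localization.AtPrime P) (v j) →
        ∃ (i j : Fin 2) (s c : A), i ≠ j ∧ s ∉ P ∧ v i ≠ 0 ∧ s * v j = c * v i := by
      intro i j hij hdvd
      obtain ⟨y, hy⟩ := hdvd
      obtain ⟨c, s, rfl⟩ := IsLocalization.exists_mk'_eq P.primeCompl y
      have hinj : Function.Injective (algebraMap A (Localization.AtPrime P)) :=
        IsLocalization.injective (Localization.AtPrime P) P.primeCompl_le_nonZeroDivisors
      have heq : (s : A) * v j = c * v i := by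
        apply hinj
        rw [map_mul, hy, map_mul, mul_left_comm, IsLocalization.mk'_spec', mul_comm]
      have hs0 : (s : A) ≠ 0 := fun h => s.2 (by rw [h]; exact P.zero_mem)
      refine ⟨i, j, s, c, hij, s.2, ?_, heq⟩
      intro hi
      rw [hi, mul_zero] at heq
      have hj := (mul_eq_zero.1 heq).resolve_left hs0
      obtain ⟨k, hk⟩ := hv'
      have : k = i ∨ k = j := by omega
      rcases this with rfl | rfl
      · exact hk hi
      · exact hk hj
    rcases ValuationRing.dvd_total (algebraMap A (Localization.AtPrime P) (v 0))
      (algebraMap A (Localization.AtPrime P) (v 1)) with h | h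
    · exact key 0 1 (by decide) h
    · exact key 1 0 (by decide) h

open Matrix in
theorem FixAux.regular {A : Type} [CommRing A] [IsDedekindDomain A] (p : ℕ) [Fact p.Prime]
    [CharP A p] (H : Subgroup (GL (Fin 2) A)) [Finite H] (hH : IsPGroup p H)
    (Q : Ideal (glInvariants H)) [Q.IsPrime] : IsRegularLocalRing (Localization.AtPrime Q) := by
  obtain ⟨v, hv, hfix⟩ := FixAux.vec p H hH
  obtain ⟨i, j, s, c, hij, hsP, hvi, hsc⟩ :=
    FixAux.ratio (Q.comap (algebraMap A (glInvariants H))) v hv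
  have hs : s ≠ 0 := fun h => hsP (by rw [h]; exact Ideal.zero_mem _)
  have hsum : ∀ {M : Type} [AddCommMonoid M] (F : Fin 2 → M), ∑ k, F k = F i + F j := by
    intro M _ F
    have h2 : (i = 0 ∧ j = 1) ∨ (i = 1 ∧ j = 0) := by omega
    rcases h2 with ⟨rfl, rfl⟩ | ⟨rfl, rfl⟩
    · exact Fin.sum_univ_two F
    · rw [Fin.sum_univ_two, add_comm]
  have hdet : ∀ g ∈ H, (g : Matrix (Fin 2) (Fin 2) A) i i * (g : Matrix (Fin 2) (Fin 2) A) j j -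
      (g : Matrix (Fin 2) (Fin 2) A) i j * (g : Matrix (Fin 2) (Fin 2) A) j i = 1 := by
    intro g hg
    have h1 : (g : Matrix (Fin 2) (Fin 2) A).det = 1 := by
      obtain ⟨k, hk⟩ := hH ⟨g, hg⟩
      have h2 : g ^ p ^ k = 1 := congrArg Subtype.val hk
      have h3 : (g : Matrix (Fin 2) (Fin 2) A).det ^ (p ^ k * 1) = 1 := by
        rw [mul_one, ← Matrix.det_pow, ← Units.val_pow_eq_pow_val, h2]
        simp
      rw [ExpChar.pow_prime_pow_mul_eq_one_iff, pow_one] at h3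
      exact h3
    rw [← h1, Matrix.det_fin_two]
    have h2 : (i = 0 ∧ j = 1) ∨ (i = 1 ∧ j = 0) := by omega
    rcases h2 with ⟨rfl, rfl⟩ | ⟨rfl, rfl⟩ <;> ring
  have ha : ∀ g ∈ H, s * (g : Matrix (Fin 2) (Fin 2) A) i i +
      c * (g : Matrix (Fin 2) (Fin 2) A) j i = s := by
    intro g hg
    have h1 := congrFun (hfix g hg) i
    rw [Matrix.vecMul, dotProduct, hsum] at h1
    apply mul_right_cancel₀ hvi
    linear_combination s * h1 - (g : Matrix (Fin 2) (Fin 2) A) j i * hsc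
  have hb : ∀ g ∈ H, s * (g : Matrix (Fin 2) (Fin 2) A) i j +
      c * (g : Matrix (Fin 2) (Fin 2) A) j j = c := by
    intro g hg
    have h1 := congrFun (hfix g hg) j
    rw [Matrix.vecMul, dotProduct, hsum] at h1
    apply mul_right_cancel₀ hvi
    linear_combination s * h1 - (g : Matrix (Fin 2) (Fin 2) A) j j * hsc + hsc
  have hd : ∀ g ∈ H, s * (g : Matrix (Fin 2) (Fin 2) A) j j =
      s + c * (g : Matrix (Fin 2) (Fin 2) A) j i := by
    intro g hg
    linear_combination s * hdet g hg - (g : Matrix (Fin 2) (Fin 2) A) j j * ha g hg +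
      (g : Matrix (Fin 2) (Fin 2) A) j i * hb g hg
  refine PolyAux.regular (H := H)
    (fun g => MvPolynomial.aeval
      (fun i => ∑ j, ((g : GL (Fin 2) A) : Matrix (Fin 2) (Fin 2) A) i j • MvPolynomial.X j))
    (glInvariants H) (fun f => ⟨fun h g => h g g.2, fun h g hg => h ⟨g, hg⟩⟩) i j hij s c hs
    (fun g => ((g : GL (Fin 2) A) : Matrix (Fin 2) (Fin 2) A) j i) ?_ ?_ ?_ ?_ Q hsP
  · rintro ⟨g, hg⟩ ⟨h, hh⟩
    apply mul_left_cancel₀ hs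
    change s * ((g : Matrix (Fin 2) (Fin 2) A) * (h : Matrix (Fin 2) (Fin 2) A)) j i = _
    rw [Matrix.mul_apply, hsum]
    linear_combination (g : Matrix (Fin 2) (Fin 2) A) j i * ha h hh +
      (h : Matrix (Fin 2) (Fin 2) A) j i * hd g hg
  · rintro ⟨g, hg⟩ ⟨h, hh⟩ hgh
    dsimp only at hgh
    have hjj : (g : Matrix (Fin 2) (Fin 2) A) j j = (h : Matrix (Fin 2) (Fin 2) A) j j := by
      apply mul_left_cancel₀ hs
      linear_combination hd g hg - hd h hh + c * hgh
    have hii : (g : Matrix (Fin 2) (Fin 2) A) i i = (h : Matrix (Fin 2) (Fin 2) A) i i := by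
      apply mul_left_cancel₀ hs
      linear_combination ha g hg - ha h hh - c * hgh
    have hij' : (g : Matrix (Fin 2) (Fin 2) A) i j = (h : Matrix (Fin 2) (Fin 2) A) i j := by
      apply mul_left_cancel₀ hs
      linear_combination hb g hg - hb h hh - c * hjj
    apply Subtype.ext
    apply Units.ext
    ext k l
    have hk : k = i ∨ k = j := by omega
    have hl : l = i ∨ l = j := by omega
    rcases hk with rfl | rfl <;> rcases hl with rfl | rfl <;> assumption
  · rintro ⟨g, hg⟩
    simp only [map_add, map_smul, MvPolynomial.aeval_X, hsum]
    simp only [MvPolynomial.smul_eq_C_mul]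
    have h1 := congrArg (MvPolynomial.C (σ := Fin 2)) (ha g hg)
    have h2 := congrArg (MvPolynomial.C (σ := Fin 2)) (hb g hg)
    simp only [map_add, map_mul] at h1 h2
    linear_combination MvPolynomial.X i * h1 + MvPolynomial.X j * h2
  · rintro ⟨g, hg⟩
    simp only [map_smul, MvPolynomial.aeval_X, hsum]
    simp only [MvPolynomial.smul_eq_C_mul]
    have h1 := congrArg (MvPolynomial.C (σ := Fin 2)) (hd g hg)
    simp only [map_add, map_mul] at h1
    linear_combination MvPolynomial.X j * h1

end

section

open Matrix in
/-- The linear substitution attached to a matrix. -/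
noncomputable def glSubst {A : Type} [CommRing A] (g : GL (Fin 2) A) :
    MvPolynomial (Fin 2) A →ₐ[A] MvPolynomial (Fin 2) A :=
  MvPolynomial.aeval (fun i => ∑ j, ((g : Matrix (Fin 2) (Fin 2) A) i j) • MvPolynomial.X j)

open Matrix in
theorem glSubst_one {A : Type} [CommRing A] (f : MvPolynomial (Fin 2) A) :
    glSubst (1 : GL (Fin 2) A) f = f := by
  have : glSubst (1 : GL (Fin 2) A) = AlgHom.id A _ := by
    apply MvPolynomial.algHom_ext
    intro i
    simp [glSubst, Matrix.one_apply]
  rw [this]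
  rfl

open Matrix in
theorem glSubst_mul {A : Type} [CommRing A] (g h : GL (Fin 2) A) (f : MvPolynomial (Fin 2) A) :
    glSubst (h * g) f = glSubst g (glSubst h f) := by
  have : glSubst (h * g) = (glSubst g).comp (glSubst h) := by
    apply MvPolynomial.algHom_ext
    intro i
    simp only [glSubst, Units.val_mul, MvPolynomial.aeval_X, AlgHom.comp_apply,
      Matrix.mul_apply, Fin.sum_univ_two, map_add, map_smul]
    module
  rw [this]
  rfl

open Matrix in
/-- The action of `G` on the polynomial ring. -/
@[reducible]
noncomputable def glAction {A : Type} [CommRing A] (G : Subgroup (GL (Fin 2) A)) :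
    MulSemiringAction G (MvPolynomial (Fin 2) A) where
  smul g f := glSubst (g : GL (Fin 2) A)⁻¹ f
  one_smul f := by
    change glSubst _ f = f
    rw [Subgroup.coe_one, inv_one, glSubst_one]
  mul_smul g h f := by
    change glSubst _ f = glSubst _ (glSubst _ f)
    rw [← glSubst_mul, Subgroup.coe_mul, _root_.mul_inv_rev]
  smul_zero g := map_zero _
  smul_add g := map_add _
  smul_one g := map_one _
  smul_mul g := map_mul _

open Matrix in
theorem glInvariants_isCM {A : Type} [CommRing A] [IsDedekindDomain A] (p : ℕ) [Fact p.Prime]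
    [CharP A p] (G : Subgroup (GL (Fin 2) A)) [Finite G] :
    IsCohenMacaulayRing (glInvariants G) := by
  let act := glAction G
  have hsmul : ∀ (g : G) (f : MvPolynomial (Fin 2) A),
    g • f = glSubst (g : GL (Fin 2) A)⁻¹ f := fun g f => rfl
  let P : Sylow p G := default
  let H' : Subgroup (GL (Fin 2) A) := (P : Subgroup G).map G.subtype
  have hH'p : IsPGroup p H' := P.isPGroup'.map G.subtype
  have hH'G : H' ≤ G := by
    rintro _ ⟨x, -, rfl⟩
    exact x.2
  have hfin : Finite H' := Finite.of_injective _ (Subgroup.inclusion_injective hH'G)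
  have hle : glInvariants G ≤ glInvariants H' := fun f hf g hg => hf g (hH'G hg)
  let alg : Algebra (glInvariants G) (glInvariants H') :=
    (Subalgebra.inclusion hle).toRingHom.toAlgebra
  have tower : IsScalarTower (glInvariants G) (glInvariants H') (MvPolynomial (Fin 2) A) :=
    IsScalarTower.of_algebraMap_eq fun _ => rfl
  have hinvG : ∀ (g : G) (b : glInvariants G),
      g • (b : MvPolynomial (Fin 2) A) = b := fun g b => b.2 _ (G.inv_mem g.2)
  have hinv : Algebra.IsInvariant (glInvariants G) (MvPolynomial (Fin 2) A) G := by
    constructor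
    intro b hb
    refine ⟨⟨b, fun g hg => ?_⟩, rfl⟩
    have := hb ⟨g⁻¹, G.inv_mem hg⟩
    rw [hsmul, inv_inv] at this
    exact this
  have hcomm : SMulCommClass G (glInvariants G) (MvPolynomial (Fin 2) A) := by
    constructor
    intro g b f
    change g • ((b : MvPolynomial (Fin 2) A) * f) = (b : MvPolynomial (Fin 2) A) * (g • f)
    rw [smul_mul', hinvG]
  have hidx : ¬ p ∣ (P : Subgroup G).index := P.not_dvd_index
  obtain ⟨u, hu⟩ : ∃ u : A, u * ((P : Subgroup G).index : A) = 1 := by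
    have hcop : Nat.Coprime (P : Subgroup G).index p :=
      ((Nat.Prime.coprime_iff_not_dvd Fact.out).2 hidx).symm
    have hunit : IsUnit ((P : Subgroup G).index : ZMod p) :=
      (ZMod.isUnit_iff_coprime _ _).2 hcop
    have h2 := hunit.map (ZMod.castHom (dvd_refl p) A)
    rw [map_natCast] at h2
    obtain ⟨u, hu⟩ := h2.exists_left_inv
    exact ⟨u, hu⟩
  exact InvAux.main (A := A) (B := glInvariants G) (S := glInvariants H')
    (R := MvPolynomial (Fin 2) A) (G := G) Subtype.val_injective Subtype.val_injective P
    (fun h hh s => s.2 _ (H'.inv_mem ⟨h, hh, rfl⟩))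
    (algebraMap A _ u) (by
      rw [← map_natCast (algebraMap A (glInvariants G)), ← map_mul, hu, map_one])
    (fun Q _ => FixAux.regular p H' hH'p Q)

end

section

namespace FFAux
open Polynomial

theorem finite_of_inj {R A B : Type*} [CommRing R] [IsNoetherianRing R] [CommRing A] [CommRing B]
    [Algebra R A] (g : A →+* B) (hg : Function.Injective g)
    (h : (g.comp (algebraMap R A)).Finite) : Module.Finite R A := by
  let := (g.comp (algebraMap R A)).toAlgebra
  have : Module.Finite R B := h
  let g' : A →ₐ[R] B := { g with commutes' := fun _ => rfl }
  exact Module.Finite.of_injective g'.toLinearMap hg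

theorem frob_finite (F : Type*) [Field F] [Finite F] (p : ℕ) [ExpChar F[X] p] (n : ℕ) :
    (iterateFrobenius F[X] p n).Finite := by
  apply RingHom.IsIntegral.to_finite
  · intro x
    have hp : 0 < p ^ n := pow_pos (expChar_pos F[X] p) n
    refine ⟨X ^ (p ^ n) - C x, monic_X_pow_sub_C _ hp.ne', ?_⟩
    simp [iterateFrobenius_def]
  · have h : (algebraMap ℤ F[X]).FiniteType := by
      rw [RingHom.finiteType_algebraMap]
      have : Module.Finite ℤ F := Module.Finite.of_finite
      exact Algebra.FiniteType.trans (S := F) inferInstance inferInstance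
    have : algebraMap ℤ F[X] = (iterateFrobenius F[X] p n).comp (algebraMap ℤ F[X]) :=
      RingHom.ext_int _ _
    rw [this] at h
    exact RingHom.FiniteType.of_comp_finiteType h

theorem finite (Fq K : Type) [Field Fq] [Finite Fq] [Field K]
    [Algebra (Polynomial Fq) K] [Algebra (RatFunc Fq) K]
    [IsScalarTower (Polynomial Fq) (RatFunc Fq) K]
    [FunctionField Fq K] : Module.Finite Fq[X] (FunctionField.ringOfIntegers Fq K) := by
  let F := RatFunc Fq
  have : FiniteDimensional F K := ‹FunctionField Fq K›
  let E := separableClosure F K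
  obtain ⟨p, hp⟩ := ExpChar.exists Fq
  have : ExpChar Fq[X] p := expChar_of_injective_ringHom (C_injective (R := Fq)) p
  have : ExpChar F p := expChar_of_injective_ringHom (IsFractionRing.injective Fq[X] F) p
  have : ExpChar E p := expChar_of_injective_ringHom (algebraMap F E).injective p
  have : ExpChar K p := expChar_of_injective_ringHom (algebraMap F K).injective p
  have : IsScalarTower Fq[X] E K := IsScalarTower.of_algebraMap_eq fun x => by
    rw [IsScalarTower.algebraMap_apply Fq[X] F K, IsScalarTower.algebraMap_apply F E K,
      ← IsScalarTower.algebraMap_apply Fq[X] F E]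
  let B := integralClosure Fq[X] E
  have : Module.Finite Fq[X] B := IsIntegralClosure.finite Fq[X] F E B
  let n := IsPurelyInseparable.exponent E K
  let f : K →+* E := IsPurelyInseparable.iterateFrobenius E K p (le_refl n)
  have hf (a : K) : algebraMap E K (f a) = a ^ p ^ n :=
    IsPurelyInseparable.algebraMap_iterateFrobenius E p (le_refl n) a
  let g : FunctionField.ringOfIntegers Fq K →+* B :=
    (f.comp (algebraMap (FunctionField.ringOfIntegers Fq K) K)).codRestrict B.toSubring (by
      rintro ⟨x, hx⟩
      change IsIntegral Fq[X] (f x)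
      rw [← isIntegral_algebraMap_iff (algebraMap E K).injective, hf]
      exact IsIntegral.pow hx _)
  have hgi : Function.Injective g := by
    intro x y h
    have := congrArg Subtype.val h
    exact Subtype.ext (f.injective this)
  refine finite_of_inj g hgi ?_
  have : g.comp (algebraMap Fq[X] (FunctionField.ringOfIntegers Fq K)) =
      (algebraMap Fq[X] B).comp (iterateFrobenius Fq[X] p n) := by
    refine RingHom.ext fun x => ?_
    apply Subtype.ext
    apply (algebraMap E K).injective
    change algebraMap E K (f (algebraMap Fq[X] K x)) =
      algebraMap E K (algebraMap Fq[X] E (x ^ p ^ n))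
    rw [hf, ← IsScalarTower.algebraMap_apply, map_pow]
  rw [this]
  exact RingHom.Finite.comp (RingHom.finite_algebraMap.mpr inferInstance) (frob_finite Fq p n)

theorem dedekind (Fq K : Type) [Field Fq] [Finite Fq] [Field K]
    [Algebra (Polynomial Fq) K] [Algebra (RatFunc Fq) K]
    [IsScalarTower (Polynomial Fq) (RatFunc Fq) K]
    [FunctionField Fq K] : IsDedekindDomain (FunctionField.ringOfIntegers Fq K) := by
  have := finite Fq K
  have : IsNoetherianRing (FunctionField.ringOfIntegers Fq K) :=
    IsNoetherianRing.of_finite Fq[X] _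
  have : Ring.DimensionLEOne (FunctionField.ringOfIntegers Fq K) :=
    Ring.DimensionLEOne.of_isIntegral Fq[X] _
  have : IsDedekindRing (FunctionField.ringOfIntegers Fq K) :=
    { (inferInstance : IsNoetherianRing _), (inferInstance : Ring.DimensionLEOne _),
      (inferInstance : IsIntegralClosure (FunctionField.ringOfIntegers Fq K)
        (FunctionField.ringOfIntegers Fq K) (FractionRing (FunctionField.ringOfIntegers Fq K))) with }
  exact {}

end FFAux

end

/-- **Equicharacteristic case.** Let `A` be the ring of integers of a global function field,
i.e. the integral closure of `F_q[t]` in a finite field extension `K` of `F_q(t)`, where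
`F_q` is a finite field. Let `G ⊆ GL_2(A)` be a finite group acting linearly on
`R = A[X, Y]` (fixing `A`). Then the ring of invariants `R^G` is Cohen–Macaulay. -/
theorem equichar_invariants_cohenMacaulay
    (Fq K : Type) [Field Fq] [Finite Fq] [Field K]
    [Algebra (Polynomial Fq) K] [Algebra (RatFunc Fq) K]
    [IsScalarTower (Polynomial Fq) (RatFunc Fq) K]
    [FunctionField Fq K]
    (G : Subgroup (Matrix.GeneralLinearGroup (Fin 2)
      ↥(FunctionField.ringOfIntegers Fq K))) [Finite ↥G] :
    IsCohenMacaulayRing ↥(glInvariants G) := by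
  have := FFAux.dedekind Fq K
  obtain ⟨p, hp⟩ := CharP.exists Fq
  have : Fact p.Prime := ⟨(CharP.char_is_prime_or_zero Fq p).resolve_right
    (CharP.char_ne_zero_of_finite Fq p)⟩
  have : CharP (FunctionField.ringOfIntegers Fq K) p :=
    charP_of_injective_ringHom (FunctionField.ringOfIntegers.algebraMap_injective Fq K) p
  exact glInvariants_isCM p G
end

section
/- Let A be the ring of integers of a number field K (a finite extension of Q). Let G be a finite subgroup of GL_2(A) acting linearly on R = A[X,Y] (fixing A). Assume that for every prime p dividing |G|, every Sylow p-subgroup of G has exponent p. Then the ring of invariants R^G is Cohen-Macaulay. -/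
section PartOne
open RingTheory.Sequence
open scoped Pointwise

variable {B R G : Type*} [CommRing B] [CommRing R] [Group G] [Finite G] [MulSemiringAction G R]
  [Algebra B R] [SMulCommClass G B R] [Algebra.IsInvariant B R G]

theorem inv_hasGoingDown (G : Type*) [Group G] [Finite G] [MulSemiringAction G R]
    [SMulCommClass G B R] [Algebra.IsInvariant B R G] [FaithfulSMul B R] :
    Algebra.HasGoingDown B R := by
  have hmonic : Algebra.IsIntegral B R := Algebra.IsInvariant.isIntegral B R G
  refine ⟨fun {p} _ Q _ hpQ => ?_⟩
  obtain ⟨Q1, _, hQ1p, hQ1⟩ := Ideal.exists_ideal_over_prime_of_isIntegral (S := R) p ⊥ (by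
    rw [← RingHom.ker_eq_comap_bot,
      (RingHom.injective_iff_ker_eq_bot _).1 (FaithfulSMul.algebraMap_injective B R)]
    exact bot_le)
  obtain ⟨Q2, hQ12, hQ2p, hQ2⟩ := Ideal.exists_ideal_over_prime_of_isIntegral_of_isPrime
    (S := R) (Q.under B) Q1 (by rw [hQ1]; exact hpQ.le)
  obtain ⟨g, hg⟩ := Algebra.IsInvariant.exists_smul_of_under_eq B R G Q2 Q hQ2
  refine ⟨g • Q1, ?_, hQ1p.smul g, ?_⟩
  · rw [hg]
    exact Ideal.pointwise_smul_le_pointwise_smul_iff.2 hQ12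
  · have : Q1.LiesOver p := ⟨hQ1.symm⟩
    exact Ideal.LiesOver.smul g

theorem inv_height_eq (G : Type*) [Group G] [Finite G] [MulSemiringAction G R]
    [SMulCommClass G B R] [Algebra.IsInvariant B R G] [FaithfulSMul B R]
    [IsNoetherianRing B] [IsNoetherianRing R] (Q : Ideal R) [Q.IsPrime] :
    (Q.under B).height = Q.height := by
  have hmonic : Algebra.IsIntegral B R := Algebra.IsInvariant.isIntegral B R G
  have := inv_hasGoingDown (B := B) (R := R) G
  have h := Ideal.height_eq_height_add_of_liesOver_of_hasGoingDown (Q.under B) Q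
  have hmin := Ideal.IsIntegral.mem_minimalPrimes_map_under (R := B) Q
  have hle : (Q.under B).map (algebraMap B R) ≤ Q := hmin.1.2
  have hp : (Q.map (Ideal.Quotient.mk <| (Q.under B).map (algebraMap B R))).IsPrime :=
    Ideal.map_isPrime_of_surjective Ideal.Quotient.mk_surjective (by simpa using hle)
  have h0 : (Q.map (Ideal.Quotient.mk <| (Q.under B).map (algebraMap B R))).height = 0 := by
    rw [Ideal.height_eq_zero_iff]
    refine ⟨⟨hp, bot_le⟩, fun q hq hqle => ?_⟩
    have hqp := hq.1
    have h1 : Q ≤ q.comap (Ideal.Quotient.mk _) := hmin.2 ⟨Ideal.comap_isPrime _ _, by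
      intro x hx
      rw [Ideal.mem_comap, Ideal.Quotient.eq_zero_iff_mem.2 hx]
      exact zero_mem _⟩ (by
        refine (Ideal.comap_mono hqle).trans ?_
        rw [Ideal.comap_map_of_surjective _ Ideal.Quotient.mk_surjective,
          ← RingHom.ker_eq_comap_bot, Ideal.mk_ker]
        exact sup_le le_rfl hle)
    exact Ideal.map_le_iff_le_comap.2 h1
  rw [h, h0, add_zero]

/-- prime avoidance -/
theorem exists_avoid (P : Ideal B) (s : Finset (Ideal B)) (hs : ∀ q ∈ s, q.IsPrime)
    (h : ∀ q ∈ s, ¬ P ≤ q) : ∃ b ∈ P, ∀ q ∈ s, b ∉ q := by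
  by_contra! hcon
  have := (Ideal.subset_union_prime (s := s) (f := id) (I := P) ⊥ ⊥ (fun q hq _ _ => hs q hq)).1
    (fun x hx => by
      obtain ⟨q, hq, hxq⟩ := hcon x hx
      simp only [Set.mem_iUnion]
      exact ⟨q, hq, hxq⟩)
  obtain ⟨q, hq, hle⟩ := this
  exact h q hq hle

theorem wreg_one {a : B} (h : ∀ x, a * x = 0 → x = 0) : IsWeaklyRegular B [a] := by
  rw [isWeaklyRegular_singleton_iff]
  exact isSMulRegular_iff_right_eq_zero_of_smul.2 h

theorem ofList_smul_top (l : List B) : (Ideal.ofList l • (⊤ : Submodule B B)) = Ideal.ofList l := by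
  simp

theorem wreg_two {a b : B} (h : ∀ x, a * x = 0 → x = 0)
    (h2 : ∀ x, b * x ∈ Ideal.span {a} → x ∈ Ideal.span {a}) : IsWeaklyRegular B [a, b] := by
  rw [show [a, b] = [a] ++ [b] from rfl, isWeaklyRegular_append_iff]
  refine ⟨wreg_one h, ?_⟩
  rw [isWeaklyRegular_singleton_iff, isSMulRegular_quotient_iff_mem_of_smul_mem, ofList_smul_top]
  simpa using h2

theorem wreg_three {a b c : B} (h : ∀ x, a * x = 0 → x = 0)
    (h2 : ∀ x, b * x ∈ Ideal.span {a} → x ∈ Ideal.span {a})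
    (h3 : ∀ x, c * x ∈ Ideal.span {a, b} → x ∈ Ideal.span {a, b}) :
    IsWeaklyRegular B [a, b, c] := by
  rw [show [a, b, c] = [a, b] ++ [c] from rfl, isWeaklyRegular_append_iff]
  refine ⟨wreg_two h h2, ?_⟩
  rw [isWeaklyRegular_singleton_iff, isSMulRegular_quotient_iff_mem_of_smul_mem, ofList_smul_top]
  have : Ideal.ofList [a, b] = Ideal.span {a, b} := by
    simp [Ideal.span_insert]
  rw [this]
  simpa using h3

/-- coprimality in a UFD from prime factor avoidance -/
theorem ufd_coprime_reg {S : Type*} [CommRing S] [IsDomain S] [UniqueFactorizationMonoid S] {a b : S}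
    (ha : a ≠ 0) (h : ∀ p, Prime p → p ∣ a → ¬ p ∣ b) (x : S) (hx : a ∣ b * x) : a ∣ x := by
  have hrel : IsRelPrime a b := (UniqueFactorizationMonoid.isRelPrime_iff_no_prime_factors ha).2
    (fun {d} hda hdb hd => h d hd hda hdb)
  exact hrel.dvd_of_dvd_mul_left hx

/-- finite set of representatives of prime factors -/
theorem ufd_finite_primes {S : Type*} [CommRing S] [IsDomain S] [UniqueFactorizationMonoid S] {a : S}
    (ha : a ≠ 0) : ∃ s : Finset S, (∀ p ∈ s, Prime p) ∧ ∀ p, Prime p → p ∣ a → ∃ q ∈ s, q ∣ p := by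
  classical
  refine ⟨(UniqueFactorizationMonoid.factors a).toFinset, fun p hp => ?_, fun p hp hpa => ?_⟩
  · exact UniqueFactorizationMonoid.prime_of_factor p (by simpa using hp)
  · obtain ⟨q, hq, hpq⟩ := UniqueFactorizationMonoid.exists_mem_factors_of_dvd ha hp.irreducible hpa
    exact ⟨q, by simpa using hq, hpq.symm.dvd⟩

theorem inv_dvd [IsDomain R] [FaithfulSMul B R] (G : Type*) [Group G] [MulSemiringAction G R]
    [SMulCommClass G B R] [Algebra.IsInvariant B R G] {a x : B} (ha : a ≠ 0)
    (h : algebraMap B R a ∣ algebraMap B R x) : a ∣ x := by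
  have hinj := FaithfulSMul.algebraMap_injective B R
  obtain ⟨z, hz⟩ := h
  have ha' : algebraMap B R a ≠ 0 := by
    rwa [Ne, map_eq_zero_iff _ hinj]
  obtain ⟨z', hz'⟩ := Algebra.IsInvariant.isInvariant (A := B) (G := G) z (fun g => by
    apply mul_left_cancel₀ ha'
    rw [← hz, ← smul_algebraMap g a, ← smul_mul', ← hz, smul_algebraMap])
  refine ⟨z', hinj ?_⟩
  rw [hz, map_mul, hz']

theorem exists_reg_two (G : Type*) [Group G] [Finite G] [MulSemiringAction G R]
    [SMulCommClass G B R] [Algebra.IsInvariant B R G] [FaithfulSMul B R]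
    [IsNoetherianRing B] [IsNoetherianRing R] [IsDomain B] [IsDomain R]
    [UniqueFactorizationMonoid R] (P : Ideal B) (hP : 1 < P.height) (hPb : P ≠ ⊥) :
    ∃ a ∈ P, ∃ b ∈ P, IsWeaklyRegular B [a, b] := by
  classical
  obtain ⟨a, haP, ha⟩ := Submodule.exists_mem_ne_zero_of_ne_bot hPb
  have hinj := FaithfulSMul.algebraMap_injective B R
  have ha' : algebraMap B R a ≠ 0 := by
    rwa [Ne, map_eq_zero_iff _ hinj]
  obtain ⟨s, hs, hs'⟩ := ufd_finite_primes ha'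
  obtain ⟨b, hbP, hb⟩ := exists_avoid P (s.image (fun l => (Ideal.span {l}).under B))
    (by
      intro q hq
      obtain ⟨l, hl, rfl⟩ := Finset.mem_image.1 hq
      have := (Ideal.span_singleton_prime (hs l hl).ne_zero).2 (hs l hl)
      infer_instance)
    (by
      intro q hq hle
      obtain ⟨l, hl, rfl⟩ := Finset.mem_image.1 hq
      have := (Ideal.span_singleton_prime (hs l hl).ne_zero).2 (hs l hl)
      have h1 := Ideal.height_mono hle
      rw [inv_height_eq G] at h1
      exact absurd (hP.trans_le (h1.trans
        (Ideal.height_span_singleton_le_one (hs l hl).not_isUnit))) (lt_irrefl _))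
  refine ⟨a, haP, b, hbP, wreg_two (fun x hx => (mul_eq_zero.1 hx).resolve_left ha) ?_⟩
  intro x hx
  rw [Ideal.mem_span_singleton] at hx ⊢
  refine inv_dvd (R := R) G ha (ufd_coprime_reg ha' (b := algebraMap B R b) (fun p hp hpa hpb => ?_) _ ?_)
  · obtain ⟨q, hq, hqp⟩ := hs' p hp hpa
    refine hb _ (Finset.mem_image_of_mem _ hq) ?_
    exact Ideal.mem_span_singleton.2 (hqp.trans hpb)
  · rw [← map_mul]; exact map_dvd _ hx

end PartOne


section PartTwo
open RingTheory.Sequence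

/-- 1-cocycles -/
def IsCocyc {G R : Type*} [Group G] [CommRing R] [MulSemiringAction G R] (w : G → R) : Prop :=
  ∀ g h, w (g * h) = w g + g • w h

/-- 1-coboundaries -/
def IsCobd {G R : Type*} [Group G] [CommRing R] [MulSemiringAction G R] (w : G → R) : Prop :=
  ∃ z : R, ∀ g, w g = g • z - z

variable {B R G : Type*} [CommRing B] [CommRing R] [Group G] [MulSemiringAction G R]
  [Algebra B R] [SMulCommClass G B R] [Algebra.IsInvariant B R G]

theorem third_reg [IsDomain B] [IsDomain R] [FaithfulSMul B R] (π a b : B) (hπ : π ≠ 0)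
    (ha : ∀ x : R, algebraMap B R π ∣ algebraMap B R a * x → algebraMap B R π ∣ x)
    (hb : ∀ x : R, algebraMap B R b * x ∈ Ideal.span {algebraMap B R π, algebraMap B R a} →
      x ∈ Ideal.span {algebraMap B R π, algebraMap B R a})
    (hC : ∀ w : G → R, IsCocyc w → IsCobd (fun g => algebraMap B R π * w g) →
      IsCobd (fun g => algebraMap B R a * w g) →
      IsCobd (fun g => algebraMap B R b * w g) → IsCobd w) :
    IsWeaklyRegular B [π, a, b] := by
  have hinj := FaithfulSMul.algebraMap_injective B R
  have hπ' : algebraMap B R π ≠ 0 := by rwa [Ne, map_eq_zero_iff _ hinj]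
  refine wreg_three (fun x hx => (mul_eq_zero.1 hx).resolve_left hπ) ?_ ?_
  · intro x hx
    rw [Ideal.mem_span_singleton] at hx ⊢
    refine inv_dvd (R := R) G hπ (ha _ ?_)
    rw [← map_mul]; exact map_dvd _ hx
  · intro x hx
    obtain ⟨c, d, hcd⟩ := Ideal.mem_span_pair.1 hx
    have hcd' : algebraMap B R c * algebraMap B R π + algebraMap B R d * algebraMap B R a
        = algebraMap B R b * algebraMap B R x := by
      rw [← map_mul, ← map_mul, ← map_mul, ← map_add, hcd]
    obtain ⟨u, v, huv⟩ := Ideal.mem_span_pair.1 (hb (algebraMap B R x)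
      (Ideal.mem_span_pair.2 ⟨_, _, hcd'⟩))
    set π' := algebraMap B R π with hπdef
    set a' := algebraMap B R a with hadef
    set b' := algebraMap B R b with hbdef
    have fπ : ∀ g : G, g • π' = π' := fun g => smul_algebraMap g π
    have fa : ∀ g : G, g • a' = a' := fun g => smul_algebraMap g a
    have fb : ∀ g : G, g • b' = b' := fun g => smul_algebraMap g b
    have key : ∀ g : G, (g • u - u) * π' + (g • v - v) * a' = 0 := by
      intro g
      have h1 : g • (u * π' + v * a') = u * π' + v * a' := by
        rw [huv, smul_algebraMap]
      rw [smul_add, smul_mul', smul_mul', fπ, fa] at h1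
      linear_combination h1
    have hdiv : ∀ g : G, ∃ w, g • v - v = π' * w := by
      intro g
      refine ha _ ⟨-(g • u - u), ?_⟩
      linear_combination key g
    choose w hw using hdiv
    have hw2 : ∀ g, g • u - u = - (a' * w g) := by
      intro g
      apply mul_right_cancel₀ hπ'
      linear_combination key g - a' * hw g
    have hcoc : IsCocyc w := by
      intro g h
      apply mul_left_cancel₀ hπ'
      have h1 := hw (g * h)
      have h2 := congrArg (g • ·) (hw h)
      simp only [smul_sub, smul_mul', fπ] at h2
      rw [mul_smul] at h1
      linear_combination -h1 + h2 + hw g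
    -- b w is a coboundary
    have hbz : ∃ z, b' * v - algebraMap B R d = π' * z := by
      refine ha _ ⟨algebraMap B R c - b' * u, ?_⟩
      linear_combination b' * huv - hcd'
    obtain ⟨z, hz⟩ := hbz
    have hbw : IsCobd (fun g => b' * w g) := by
      refine ⟨z, fun g => ?_⟩
      apply mul_left_cancel₀ hπ'
      have h2 := congrArg (g • ·) hz
      simp only [smul_sub, smul_mul', fπ, fb, smul_algebraMap] at h2
      linear_combination h2 - hz - b' * hw g
    obtain ⟨t, ht⟩ := hC w hcoc ⟨v, fun g => (hw g).symm⟩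
      ⟨-u, fun g => by
        simp only [smul_neg]
        linear_combination hw2 g⟩ hbw
    obtain ⟨v', hv'⟩ := Algebra.IsInvariant.isInvariant (A := B) (G := G) (v - π' * t) (fun g => by
      rw [smul_sub, smul_mul', fπ]
      linear_combination hw g + π' * ht g)
    obtain ⟨u', hu'⟩ := Algebra.IsInvariant.isInvariant (A := B) (G := G) (u + a' * t) (fun g => by
      rw [smul_add, smul_mul', fa]
      linear_combination hw2 g - a' * ht g)
    refine Ideal.mem_span_pair.2 ⟨u', v', hinj ?_⟩
    rw [map_add, map_mul, map_mul, hu', hv', ← huv]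
    ring

theorem exists_reg_three (G : Type*) [Group G] [Finite G] [MulSemiringAction G R]
    [SMulCommClass G B R] [Algebra.IsInvariant B R G] [FaithfulSMul B R]
    [IsNoetherianRing B] [IsNoetherianRing R] [IsDomain B] [IsDomain R]
    {S : Type*} [CommRing S] [IsDomain S] [UniqueFactorizationMonoid S]
    (P : Ideal B) (hP : 2 < P.height) (π : B) (hπ : π ≠ 0)
    (f : R →+* S) (hf : Function.Surjective f)
    (hker : RingHom.ker f = Ideal.span {algebraMap B R π})
    (hC : ∀ a b : B, f (algebraMap B R a) ≠ 0 →
      (∀ p, Prime p → p ∣ f (algebraMap B R a) → ¬ p ∣ f (algebraMap B R b)) →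
      ∀ w : G → R, IsCocyc w → IsCobd (fun g => algebraMap B R π * w g) →
      IsCobd (fun g => algebraMap B R a * w g) →
      IsCobd (fun g => algebraMap B R b * w g) → IsCobd w) :
    ∃ a ∈ P, ∃ b ∈ P, IsWeaklyRegular B [π, a, b] := by
  classical
  have hinj := FaithfulSMul.algebraMap_injective B R
  have hπ' : algebraMap B R π ≠ 0 := by rwa [Ne, map_eq_zero_iff _ hinj]
  have hdvd : ∀ x : R, f x = 0 ↔ algebraMap B R π ∣ x := by
    intro x
    rw [← RingHom.mem_ker, hker, Ideal.mem_span_singleton]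
  have hkp : (RingHom.ker f).IsPrime := RingHom.ker_isPrime f
  have hnu : ¬ IsUnit (algebraMap B R π) := fun h => hkp.ne_top (by
    rw [hker]; exact Ideal.span_singleton_eq_top.2 h)
  obtain ⟨a, haP, ha⟩ : ∃ a ∈ P, a ∉ (RingHom.ker f).under B := by
    by_contra! hcon
    have h1 := Ideal.height_mono (show P ≤ _ from hcon)
    rw [inv_height_eq G, hker] at h1
    have h2 := hP.trans_le (h1.trans (Ideal.height_span_singleton_le_one hnu))
    exact absurd h2 (by decide)
  have ha' : f (algebraMap B R a) ≠ 0 := ha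
  obtain ⟨s, hs, hs'⟩ := ufd_finite_primes ha'
  have hsp : ∀ l ∈ s, (Ideal.span {l}).IsPrime := fun l hl =>
    (Ideal.span_singleton_prime (hs l hl).ne_zero).2 (hs l hl)
  obtain ⟨b, hbP, hb⟩ := exists_avoid P (s.image (fun l => ((Ideal.span {l}).comap f).under B))
    (by
      intro q hq
      obtain ⟨l, hl, rfl⟩ := Finset.mem_image.1 hq
      have := hsp l hl
      infer_instance)
    (by
      intro q hq hle
      obtain ⟨l, hl, rfl⟩ := Finset.mem_image.1 hq
      have := hsp l hl
      have h1 := Ideal.height_mono hle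
      rw [inv_height_eq G] at h1
      obtain ⟨l', rfl⟩ := hf l
      have h3 : (Ideal.span {f l'}).comap f
          = Ideal.span (({algebraMap B R π, l'} : Finset R) : Set R) := by
        rw [← Set.image_singleton, ← Ideal.map_span, Ideal.comap_map_of_surjective f hf,
          ← RingHom.ker_eq_comap_bot, hker, Finset.coe_insert, Finset.coe_singleton,
          Ideal.span_insert, sup_comm]
      have h4 : ((Ideal.span {f l'}).comap f).height ≤ 2 := by
        refine (Ideal.height_le_card_of_mem_minimalPrimes_span_finset
          (s := {algebraMap B R π, l'}) ?_).trans ?_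
        · rw [← h3, Ideal.minimalPrimes_eq_subsingleton_self]
          rfl
        · exact_mod_cast Finset.card_le_two
      exact absurd (hP.trans_le (h1.trans h4)) (lt_irrefl _))
  have hcop : ∀ p, Prime p → p ∣ f (algebraMap B R a) → ¬ p ∣ f (algebraMap B R b) := by
    intro p hp hpa hpb
    obtain ⟨q, hq, hqp⟩ := hs' p hp hpa
    refine hb _ (Finset.mem_image_of_mem _ hq) ?_
    exact Ideal.mem_span_singleton.2 (hqp.trans hpb)
  refine ⟨a, haP, b, hbP, third_reg (G := G) π a b hπ ?_ ?_ (hC a b ha' hcop)⟩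
  · intro x hx
    rw [← hdvd, map_mul] at hx
    exact (hdvd x).1 ((mul_eq_zero.1 hx).resolve_left ha')
  · have hmem : ∀ x : R, x ∈ Ideal.span {algebraMap B R π, algebraMap B R a} ↔
        f (algebraMap B R a) ∣ f x := by
      intro x
      rw [← Ideal.mem_span_singleton, ← Ideal.mem_comap, ← Set.image_singleton (f := f),
        ← Ideal.map_span, Ideal.comap_map_of_surjective f hf,
        ← RingHom.ker_eq_comap_bot, hker, Ideal.span_insert, sup_comm]
    intro x hx
    rw [hmem, map_mul] at hx
    rw [hmem]
    exact ufd_coprime_reg ha' hcop _ hx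

/-- transfer -/
theorem cobd_of_subgroup {G R : Type*} [Group G] [Finite G] [CommRing R] [MulSemiringAction G R]
    (H : Subgroup G) (hu : IsUnit (H.index : R)) (w : G → R) (hw : IsCocyc w)
    (hH : ∃ z : R, ∀ h ∈ H, w h = h • z - z) : IsCobd w := by
  classical
  obtain ⟨z, hz⟩ := hH
  let w' : G → R := fun g => w g - (g • z - z)
  have hw' : IsCocyc w' := by
    intro g h
    simp only [w', hw g h, smul_sub, mul_smul]
    ring
  have h0 : ∀ h ∈ H, w' h = 0 := fun h hh => by simp [w', hz h hh]
  let W : G ⧸ H → R := Quotient.lift w' (by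
    intro g g' hgg
    have hm : g⁻¹ * g' ∈ H := QuotientGroup.leftRel_apply.1 hgg
    have := hw' g (g⁻¹ * g')
    rw [h0 _ hm, smul_zero, add_zero, mul_inv_cancel_left] at this
    exact this.symm)
  have hW : ∀ (g : G) (x : G ⧸ H), W (g • x) = w' g + g • W x := by
    intro g x
    induction x using QuotientGroup.induction_on with
    | H y => exact hw' g y
  cases nonempty_fintype (G ⧸ H)
  let s := ∑ x, W x
  have hs : ∀ g : G, s = (H.index : R) * w' g + g • s := by
    intro g
    have h1 : s = ∑ x, W (g • x) := (Equiv.sum_comp (MulAction.toPerm g) W).symm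
    calc s = ∑ x, (w' g + g • W x) := by rw [h1]; simp only [hW]
      _ = _ := ?_
    rw [Finset.sum_add_distrib, Finset.sum_const, ← Finset.smul_sum, nsmul_eq_mul, Finset.card_univ, Subgroup.index, Nat.card_eq_fintype_card]
  obtain ⟨u, hu⟩ := hu
  have fixu : ∀ g : G, g • (↑u⁻¹ : R) = ↑u⁻¹ := by
    intro g
    have h1 : (u : R) * (g • (↑u⁻¹ : R)) = 1 := by
      have : g • ((u : R) * ↑u⁻¹) = 1 := by simp
      rw [smul_mul', hu] at this
      rw [hu]
      have h2 : g • (H.index : R) = H.index := map_natCast (MulSemiringAction.toRingHom G R g) _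
      rwa [h2] at this
    calc g • (↑u⁻¹ : R) = ↑u⁻¹ * (u * (g • (↑u⁻¹ : R))) := by simp
      _ = ↑u⁻¹ := by rw [h1, mul_one]
  refine ⟨z - ↑u⁻¹ * s, fun g => ?_⟩
  have h1 := hs g
  rw [← hu] at h1
  have h2 : w' g = ↑u⁻¹ * s - ↑u⁻¹ * (g • s) := by
    have : ↑u⁻¹ * ((u : R) * w' g) = w' g := by simp
    rw [← this]
    linear_combination -(↑u⁻¹ : R) * h1
  have h3 : w g = w' g + (g • z - z) := by simp [w']
  rw [h3, h2, smul_sub, smul_mul', fixu]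
  ring

/-- division -/
theorem cobd_of_division {D H : Type*} [CommRing D] [Nontrivial D] [Group H] [MulSemiringAction H (Polynomial D)]
    (hdeg : ∀ (h : H) (f : Polynomial D), (h • f).degree ≤ f.degree)
    (F : Polynomial D) (hF : F.Monic) (hinv : ∀ h : H, h • F = F)
    (w : H → Polynomial D) (hw : IsCobd (fun h => F * w h)) : IsCobd w := by
  obtain ⟨z, hz⟩ := hw
  refine ⟨z /ₘ F, fun h => ?_⟩
  have hdiv := Polynomial.modByMonic_add_div z F
  set r := z %ₘ F with hr
  set q := z /ₘ F with hq
  have hrd : r.degree < F.degree := Polynomial.degree_modByMonic_lt z hF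
  have h1 := hz h
  rw [← hdiv, smul_add, smul_mul', hinv] at h1
  have h2 : F * (w h - (h • q - q)) = h • r - r := by linear_combination h1
  have h3 : (h • r - r).degree < F.degree :=
    (Polynomial.degree_sub_le _ _).trans_lt (max_lt ((hdeg h r).trans_lt hrd) hrd)
  by_contra hne
  have h4 : w h - (h • q - q) ≠ 0 := fun h => hne (sub_eq_zero.1 h)
  have h5 : F.degree ≤ (F * (w h - (h • q - q))).degree := by
    rw [hF.degree_mul_comm, hF.degree_mul]
    exact le_add_of_nonneg_left (Polynomial.zero_le_degree_iff.2 h4)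
  rw [h2] at h5
  exact absurd h3 (not_lt.2 h5)

end PartTwo


section PartThree

theorem pow_mem_fixed_combo {G R : Type*} [Group G] [Finite G] [CommRing R]
    [MulSemiringAction G R] (j1 j2 j3 F : R) (h1 : ∀ g : G, g • j1 = j1)
    (h2 : ∀ g : G, g • j2 = j2) (h3 : ∀ g : G, g • j3 = j3) (hF : ∀ g : G, g • F = F)
    (hm : F ∈ Ideal.span {j1, j2, j3}) :
    ∃ (n : ℕ) (c1 c2 c3 : R), (∀ g : G, g • c1 = c1) ∧ (∀ g : G, g • c2 = c2) ∧
      (∀ g : G, g • c3 = c3) ∧ F ^ n = c1 * j1 + c2 * j2 + c3 * j3 := by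
  let B := FixedPoints.subring R G
  have hinv : Algebra.IsInvariant B R G := ⟨fun b hb => ⟨⟨b, hb⟩, rfl⟩⟩
  have hmonic : Algebra.IsIntegral B R := Algebra.IsInvariant.isIntegral B R G
  let i1 : B := ⟨j1, h1⟩
  let i2 : B := ⟨j2, h2⟩
  let i3 : B := ⟨j3, h3⟩
  let F' : B := ⟨F, hF⟩
  have key : F' ∈ (Ideal.span {i1, i2, i3} : Ideal B).radical := by
    rw [Ideal.radical_eq_sInf, Ideal.mem_sInf]
    rintro q ⟨hq1, hq2⟩
    obtain ⟨Q, -, hQ, hQq⟩ := Ideal.exists_ideal_over_prime_of_isIntegral (S := R) q ⊥ (by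
      intro x hx
      have : x = 0 := Subtype.ext hx
      rw [this]; exact q.zero_mem)
    rw [← hQq, Ideal.mem_comap]
    have hle : (Ideal.span {j1, j2, j3} : Ideal R) ≤ Q := by
      rw [Ideal.span_le]
      have hs : ∀ i ∈ ({i1, i2, i3} : Set B), (i : R) ∈ Q := fun i hi => by
        have := hq1 (Ideal.subset_span hi)
        rw [← hQq] at this
        exact this
      rintro x (rfl | rfl | rfl)
      · exact hs i1 (by simp)
      · exact hs i2 (by simp)
      · exact hs i3 (by simp)
    exact hle hm
  obtain ⟨n, hn⟩ := key
  obtain ⟨a, z, hz, e1⟩ := Ideal.mem_span_insert.1 hn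
  obtain ⟨b, c, e2⟩ := Ideal.mem_span_pair.1 hz
  refine ⟨n, a, b, c, a.2, b.2, c.2, ?_⟩
  have := congrArg (fun x : B => (x : R)) e1
  rw [← e2] at this
  simpa [F', i1, i2, i3, add_assoc] using this

theorem cobd_combo {G R : Type*} [Group G] [CommRing R]
    [MulSemiringAction G R] (j1 j2 j3 c1 c2 c3 : R)
    (h1 : ∀ g : G, g • c1 = c1) (h2 : ∀ g : G, g • c2 = c2) (h3 : ∀ g : G, g • c3 = c3)
    (w : G → R) (w1 : IsCobd (fun g => j1 * w g)) (w2 : IsCobd (fun g => j2 * w g))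
    (w3 : IsCobd (fun g => j3 * w g)) :
    IsCobd (fun g => (c1 * j1 + c2 * j2 + c3 * j3) * w g) := by
  obtain ⟨z1, e1⟩ := w1
  obtain ⟨z2, e2⟩ := w2
  obtain ⟨z3, e3⟩ := w3
  refine ⟨c1 * z1 + c2 * z2 + c3 * z3, fun g => ?_⟩
  simp only [smul_add, smul_mul', h1, h2, h3]
  linear_combination c1 * e1 g + c2 * e2 g + c3 * e3 g

/-- the quotient of `k[X,Y]` by two coprime elements is finite over `k` -/
theorem finite_quot {k : Type*} [Field k] (a b : MvPolynomial (Fin 2) k) (ha : a ≠ 0)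
    (hab : ∀ p, Prime p → p ∣ a → ¬ p ∣ b) :
    Module.Finite k (MvPolynomial (Fin 2) k ⧸ (Ideal.span {a, b} : Ideal _)) := by
  set I : Ideal (MvPolynomial (Fin 2) k) := Ideal.span {a, b}
  have hdim : Ring.KrullDimLE 0 (MvPolynomial (Fin 2) k ⧸ I) := by
    rw [Ring.krullDimLE_zero_iff]
    intro q hq
    let Q := q.comap (Ideal.Quotient.mk I)
    have hQ : Q.IsPrime := Ideal.IsPrime.comap _
    have hIQ : I ≤ Q := by
      intro x hx
      simp [Q, Ideal.mem_comap, Ideal.Quotient.eq_zero_iff_mem.2 hx]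
    have haQ : a ∈ Q := hIQ (Ideal.subset_span (by simp))
    have hbQ : b ∈ Q := hIQ (Ideal.subset_span (by simp))
    have hmax : Q.IsMaximal := by
      obtain ⟨l, hl, hlp, hla⟩ : ∃ l ∈ Q, Prime l ∧ l ∣ a := by
        classical
        obtain ⟨f, hf, u, hu⟩ := UniqueFactorizationMonoid.exists_prime_factors a ha
        have : f.prod ∈ Q := by
          rw [← hu] at haQ
          exact (hQ.mem_or_mem haQ).resolve_right
            (fun h => hQ.ne_top (Ideal.eq_top_of_isUnit_mem _ h u.isUnit))
        obtain ⟨l, hlf, hlQ⟩ := (hQ.multiset_prod_mem_iff_exists_mem f).1 this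
        exact ⟨l, hlQ, hf l hlf, (Multiset.dvd_prod hlf).trans ⟨u, hu.symm⟩⟩
      have hlb := hab l hlp hla
      have hL : (Ideal.span {l} : Ideal (MvPolynomial (Fin 2) k)).IsPrime :=
        (Ideal.span_singleton_prime hlp.ne_zero).2 hlp
      have h1 : (⊥ : Ideal (MvPolynomial (Fin 2) k)) < Ideal.span {l} := by
        rw [bot_lt_iff_ne_bot, Ne, Ideal.span_singleton_eq_bot]; exact hlp.ne_zero
      have h2 : Ideal.span {l} < Q := by
        refine lt_of_le_of_ne ((Ideal.span_singleton_le_iff_mem _).2 hl) (fun h => hlb ?_)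
        rw [← Ideal.mem_span_singleton, h]; exact hbQ
      have e1 := Ideal.height_add_one_le_of_lt_of_isPrime h1
      have e2 := Ideal.height_add_one_le_of_lt_of_isPrime h2
      have e3 : (2 : ℕ∞) ≤ Q.height := by
        refine le_trans ?_ (le_trans (add_le_add_left e1 1) e2)
        rw [add_assoc]
        exact le_trans (by norm_num) le_add_self
      have hd : ringKrullDim (MvPolynomial (Fin 2) k) = 2 := by
        rw [MvPolynomial.ringKrullDim_of_isNoetherianRing]
        simp [ringKrullDim_eq_zero_of_field]
      have e4 : (Q.height : WithBot ℕ∞) ≤ ringKrullDim (MvPolynomial (Fin 2) k) :=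
        Ideal.height_le_ringKrullDim_of_isPrime
      have : (Q.height : WithBot ℕ∞) = ringKrullDim (MvPolynomial (Fin 2) k) := by
        refine le_antisymm e4 ?_
        rw [hd]; exact WithBot.coe_le_coe.2 e3
      have : FiniteRingKrullDim (MvPolynomial (Fin 2) k) := by
        rw [finiteRingKrullDim_iff_ne_bot_and_top, hd]
        exact ⟨by decide, by decide⟩
      exact Ideal.isMaximal_of_height_eq_ringKrullDim ‹_›
    have := Ideal.map_eq_top_or_isMaximal_of_surjective (Ideal.Quotient.mk I)
      Ideal.Quotient.mk_surjective hmax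
    rw [Ideal.map_comap_of_surjective _ Ideal.Quotient.mk_surjective] at this
    exact this.resolve_left hq.ne_top
  have : IsArtinianRing (MvPolynomial (Fin 2) k ⧸ I) :=
    isArtinianRing_iff_krullDimLE_zero.2 hdim
  exact Module.finite_of_isArtinianRing k _

end PartThree


section PartFour
open Polynomial

theorem cobd_of_division' {D H : Type*} [CommRing D] [IsDomain D] [Group H]
    [MulSemiringAction H (Polynomial D)]
    (hdeg : ∀ (h : H) (f : Polynomial D), (h • f).degree ≤ f.degree)
    (F : Polynomial D) (hF : IsUnit F.leadingCoeff) (hinv : ∀ h : H, h • F = F)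
    (w : H → Polynomial D) (hw : IsCobd (fun h => F * w h)) : IsCobd w := by
  obtain ⟨z, hz⟩ := hw
  obtain ⟨U, hU⟩ := hF
  have hF0 : F ≠ 0 := by
    rintro rfl
    rw [leadingCoeff_zero] at hU
    exact U.ne_zero hU
  have hE : (F * C (↑U⁻¹ : D)).Monic := by
    rw [Monic, leadingCoeff_mul, leadingCoeff_C, ← hU, Units.mul_inv]
  have hEd : (F * C (↑U⁻¹ : D)).degree = F.degree := by
    rw [degree_mul, degree_C (Units.ne_zero _), add_zero]
  have hdiv := Polynomial.modByMonic_add_div z (F * C (↑U⁻¹ : D))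
  have hrd := Polynomial.degree_modByMonic_lt z hE
  rw [hEd] at hrd
  set r := z %ₘ (F * C (↑U⁻¹ : D)) with hr
  rw [mul_assoc] at hdiv
  set q := C (↑U⁻¹ : D) * (z /ₘ (F * C (↑U⁻¹ : D))) with hq
  refine ⟨q, fun h => ?_⟩
  have h1 := hz h
  rw [← hdiv, smul_add, smul_mul', hinv] at h1
  have h2 : F * (w h - (h • q - q)) = h • r - r := by linear_combination h1
  have h3 : (h • r - r).degree < F.degree :=
    (Polynomial.degree_sub_le _ _).trans_lt (max_lt ((hdeg h r).trans_lt hrd) hrd)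
  by_contra hne
  have h4 : w h - (h • q - q) ≠ 0 := fun h => hne (sub_eq_zero.1 h)
  have h5 : F.degree ≤ (F * (w h - (h • q - q))).degree := by
    rw [degree_mul]
    exact le_add_of_nonneg_right (Polynomial.zero_le_degree_iff.2 h4)
  rw [h2] at h5
  exact absurd h3 (not_lt.2 h5)

theorem cobd_poly {O D H : Type*} [CommRing O] [CommRing D] [IsDomain D] [Algebra O D]
    [Group H] [Finite H] [MulSemiringAction H (Polynomial D)]
    (hO : ∀ (h : H) (o : O), h • algebraMap O D[X] o = algebraMap O D[X] o)
    (hC : ∀ (h : H) (d : D), ∃ d', h • (C d : D[X]) = C d')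
    (hX : ∀ h : H, ∃ u v : D, IsUnit u ∧ h • (X : D[X]) = C u * X + C v)
    (j1 j2 j3 : D[X]) (h1 : ∀ g : H, g • j1 = j1)
    (h2 : ∀ g : H, g • j2 = j2) (h3 : ∀ g : H, g • j3 = j3)
    (hmonic : ∀ x : D[X], ∃ p : O[X], p.Monic ∧ aeval x p ∈ Ideal.span {j1, j2, j3})
    (w : H → D[X]) (w1 : IsCobd (fun g => j1 * w g)) (w2 : IsCobd (fun g => j2 * w g))
    (w3 : IsCobd (fun g => j3 * w g)) : IsCobd w := by
  classical
  cases nonempty_fintype H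
  choose u v hu huv using hX
  have hlin : ∀ h, (h • (X : D[X])).natDegree = 1 := fun h => by
    rw [huv]; exact natDegree_linear (hu h).ne_zero
  have hlead : ∀ h, (h • (X : D[X])).leadingCoeff = u h := fun h => by
    rw [huv]; exact leadingCoeff_linear (hu h).ne_zero
  have hdeg : ∀ (h : H) (f : Polynomial D), (h • f).degree ≤ f.degree := by
    intro h f
    conv_lhs => rw [f.as_sum_support_C_mul_X_pow]
    rw [Finset.smul_sum]
    refine (degree_sum_le _ _).trans (Finset.sup_le fun i hi => ?_)
    obtain ⟨d', hd'⟩ := hC h (f.coeff i)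
    rw [smul_mul', smul_pow', hd']
    refine (degree_mul_le _ _).trans ((add_le_add_left degree_C_le _).trans ?_)
    rw [zero_add, degree_pow, degree_eq_natDegree (fun h0 => by simpa [h0] using hlin h), hlin]
    simpa using le_degree_of_mem_supp i hi
  let T : D[X] := ∏ h : H, h • (X : D[X])
  have hT : ∀ h : H, h • T = T := by
    intro h
    simp only [T, Finset.smul_prod', smul_smul]
    exact Fintype.prod_equiv (Equiv.mulLeft h) _ _ (fun _ => rfl)
  have hTl : IsUnit T.leadingCoeff := by
    simp only [T, leadingCoeff_prod, hlead]
    exact IsUnit.prod_univ_iff.2 hu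
  have hTd : T.natDegree ≠ 0 := by
    rw [natDegree_prod _ _ (fun h _ h0 => by simpa [h0] using hlin h)]
    simp [hlin]
  obtain ⟨p, hp, hpJ⟩ := hmonic T
  have hF : ∀ h : H, h • (aeval T p) = aeval T p := by
    intro h
    rw [aeval_def, eval₂_eq_sum_range, Finset.smul_sum]
    simp only [smul_mul', smul_pow', hT, hO]
  have hFl : IsUnit (aeval T p).leadingCoeff := by
    have : aeval T p = (p.map (algebraMap O D)).comp T := by
      rw [comp, eval₂_map, aeval_def]; rfl
    rw [this, leadingCoeff_comp hTd, (hp.map _).leadingCoeff, one_mul]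
    exact hTl.pow _
  obtain ⟨n, c1, c2, c3, k1, k2, k3, e⟩ := pow_mem_fixed_combo j1 j2 j3 _ h1 h2 h3 hF hpJ
  refine cobd_of_division' hdeg (aeval T p ^ n) ?_ ?_ w ?_
  · rw [leadingCoeff_pow]; exact hFl.pow _
  · intro h; rw [smul_pow', hF]
  · rw [e]; exact cobd_combo j1 j2 j3 c1 c2 c3 k1 k2 k3 w w1 w2 w3

theorem cobd_poly_equiv {O D H R : Type*} [CommRing O] [CommRing D] [IsDomain D] [Algebra O D]
    [CommRing R] [Algebra O R]
    [Group H] [Finite H] [MulSemiringAction H R] (e : R ≃ₐ[O] D[X])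
    (hO : ∀ (h : H) (o : O), h • algebraMap O R o = algebraMap O R o)
    (hC : ∀ (h : H) (d : D), ∃ d', e (h • e.symm (C d : D[X])) = C d')
    (hX : ∀ h : H, ∃ u v : D, IsUnit u ∧ e (h • e.symm (X : D[X])) = C u * X + C v)
    (j1 j2 j3 : R) (h1 : ∀ g : H, g • j1 = j1)
    (h2 : ∀ g : H, g • j2 = j2) (h3 : ∀ g : H, g • j3 = j3)
    (hmonic : ∀ x : R, ∃ p : O[X], p.Monic ∧ aeval x p ∈ Ideal.span {j1, j2, j3})
    (w : H → R) (w1 : IsCobd (fun g => j1 * w g)) (w2 : IsCobd (fun g => j2 * w g))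
    (w3 : IsCobd (fun g => j3 * w g)) : IsCobd w := by
  let act : MulSemiringAction H D[X] :=
    { smul := fun h f => e (h • e.symm f)
      one_smul := fun f => by change e ((1 : H) • e.symm f) = f; simp
      mul_smul := fun g h f => by
        change e ((g * h) • e.symm f) = e (g • e.symm (e (h • e.symm f)))
        simp [mul_smul]
      smul_zero := fun h => by change e (h • e.symm 0) = 0; simp
      smul_add := fun h a b => by
        change e (h • e.symm (a + b)) = e (h • e.symm a) + e (h • e.symm b); simp
      smul_one := fun h => by change e (h • e.symm 1) = 1; simp
      smul_mul := fun h a b => by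
        change e (h • e.symm (a * b)) = e (h • e.symm a) * e (h • e.symm b); simp }
  have hact : ∀ (h : H) (f : D[X]), h • f = e (h • e.symm f) := fun _ _ => rfl
  have hact' : ∀ (h : H) (f : R), h • e f = e (h • f) := fun h f => by rw [hact]; simp
  have tr : ∀ (j : R), IsCobd (fun g => j * w g) → IsCobd (fun g => e j * e (w g)) := by
    rintro j ⟨z, hz⟩
    refine ⟨e z, fun g => ?_⟩
    have := congrArg e (hz g)
    simp only [map_mul, map_sub] at this
    rw [hact']; exact this
  obtain ⟨z, hz⟩ := cobd_poly (O := O) (H := H) (fun h o => by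
      rw [← e.commutes, hact', hO]) hC hX (e j1) (e j2) (e j3)
    (fun g => by rw [hact', h1]) (fun g => by rw [hact', h2]) (fun g => by rw [hact', h3])
    (fun x => by
      obtain ⟨p, hp, hm⟩ := hmonic (e.symm x)
      refine ⟨p, hp, ?_⟩
      have := Ideal.mem_map_of_mem (e : R →+* D[X]) hm
      rw [Ideal.map_span] at this
      have h2 : e (aeval (e.symm x) p) = aeval x p := by
        conv_rhs => rw [← e.apply_symm_apply x]
        rw [← aeval_algHom_apply]
      simpa [Set.image_insert_eq, h2] using this)
    (fun g => e (w g)) (tr _ w1) (tr _ w2) (tr _ w3)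
  refine ⟨e.symm z, fun g => e.injective ?_⟩
  refine (hz g).trans ?_
  rw [map_sub, hact]; simp

end PartFour


section PartFive
open MvPolynomial

/-- linear substitution -/
noncomputable def msub {O : Type*} [CommRing O] (M : Matrix (Fin 2) (Fin 2) O) :
    MvPolynomial (Fin 2) O →ₐ[O] MvPolynomial (Fin 2) O :=
  aeval (fun i => ∑ j, M i j • X j)

theorem msub_X {O : Type*} [CommRing O] (M : Matrix (Fin 2) (Fin 2) O) (i : Fin 2) :
    msub M (X i) = ∑ j, M i j • X j := by simp [msub]

theorem msub_C {O : Type*} [CommRing O] (M : Matrix (Fin 2) (Fin 2) O) (c : O) :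
    msub M (C c) = C c := (msub M).commutes c

theorem msub_msub {O : Type*} [CommRing O] (M N : Matrix (Fin 2) (Fin 2) O) (f) :
    msub M (msub N f) = msub (N * M) f := by
  have : (msub M).comp (msub N) = msub (N * M) := by
    apply MvPolynomial.algHom_ext
    intro i
    rw [AlgHom.comp_apply, msub_X, msub_X]
    simp only [Fin.sum_univ_two, map_add, map_smul, msub_X, Matrix.mul_apply, add_smul,
      smul_add, smul_smul]
    abel
  exact DFunLike.congr_fun this f

theorem msub_one {O : Type*} [CommRing O] (f) : msub (1 : Matrix (Fin 2) (Fin 2) O) f = f := by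
  have : msub (1 : Matrix (Fin 2) (Fin 2) O) = AlgHom.id O _ := by
    apply MvPolynomial.algHom_ext
    intro i
    rw [msub_X]
    simp [Matrix.one_apply]
  rw [this]; rfl

theorem map_msub {O O' : Type*} [CommRing O] [CommRing O'] (φ : O →+* O')
    (M : Matrix (Fin 2) (Fin 2) O) (f) :
    map φ (msub M f) = msub (M.map φ) (map φ f) := by
  have : (map φ).comp (msub M).toRingHom = (msub (M.map φ)).toRingHom.comp (map φ) := by
    apply MvPolynomial.ringHom_ext
    · intro r
      simp
    · intro i
      simp [msub_X, smul_eq_C_mul]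
  exact DFunLike.congr_fun this f

/-- the action of a group on polynomials given by a representation -/
@[reducible] noncomputable def polyAction {O G : Type*} [CommRing O] [Group G]
    (ρ : G →* Matrix.GeneralLinearGroup (Fin 2) O) :
    MulSemiringAction G (MvPolynomial (Fin 2) O) where
  smul g f := msub (ρ g⁻¹ : Matrix (Fin 2) (Fin 2) O) f
  one_smul f := by
    change msub (ρ (1 : G)⁻¹ : Matrix (Fin 2) (Fin 2) O) f = f
    simp [msub_one]
  mul_smul g h f := by
    change msub (ρ (g * h)⁻¹ : Matrix (Fin 2) (Fin 2) O) f =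
      msub (ρ g⁻¹ : Matrix (Fin 2) (Fin 2) O) (msub (ρ h⁻¹ : Matrix (Fin 2) (Fin 2) O) f)
    rw [msub_msub, mul_inv_rev, map_mul]; rfl
  smul_zero g := map_zero (msub (ρ g⁻¹ : Matrix (Fin 2) (Fin 2) O))
  smul_add g := map_add (msub (ρ g⁻¹ : Matrix (Fin 2) (Fin 2) O))
  smul_one g := map_one (msub (ρ g⁻¹ : Matrix (Fin 2) (Fin 2) O))
  smul_mul g := map_mul (msub (ρ g⁻¹ : Matrix (Fin 2) (Fin 2) O))

/-- linear change of coordinates -/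
noncomputable def msubEquiv {O : Type*} [CommRing O] (M N : Matrix (Fin 2) (Fin 2) O)
    (h1 : M * N = 1) (h2 : N * M = 1) :
    MvPolynomial (Fin 2) O ≃ₐ[O] MvPolynomial (Fin 2) O :=
  AlgEquiv.ofAlgHom (msub M) (msub N)
    (by ext1 i; simp [msub_msub, h2, msub_one])
    (by ext1 i; simp [msub_msub, h1, msub_one])

/-- coefficientwise retraction -/
noncomputable def cret {O O' : Type*} [CommRing O] [CommRing O'] [Algebra O O']
    (ret : O' →ₗ[O] O) : MvPolynomial (Fin 2) O' →ₗ[O] MvPolynomial (Fin 2) O :=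
  (TensorProduct.lid O (MvPolynomial (Fin 2) O)).toLinearMap ∘ₗ
    (ret.rTensor (MvPolynomial (Fin 2) O)) ∘ₗ
    ((algebraTensorAlgEquiv (σ := Fin 2) O O').symm.toLinearMap.restrictScalars O)

theorem cret_C_mul {O O' : Type*} [CommRing O] [CommRing O'] [Algebra O O']
    (ret : O' →ₗ[O] O) (c : O') (g : MvPolynomial (Fin 2) O) :
    cret ret (C c * map (algebraMap O O') g) = C (ret c) * g := by
  have : (algebraTensorAlgEquiv (σ := Fin 2) O O').symm (C c * map (algebraMap O O') g)
      = c ⊗ₜ[O] g := by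
    rw [AlgEquiv.symm_apply_eq, algebraTensorAlgEquiv_tmul, smul_eq_C_mul]
  simp only [cret, LinearMap.comp_apply, LinearMap.restrictScalars_apply,
    AlgEquiv.toLinearMap_apply, this, LinearMap.rTensor_tmul]
  simp [smul_eq_C_mul]

theorem cret_msub {O O' : Type*} [CommRing O] [CommRing O'] [Algebra O O']
    (ret : O' →ₗ[O] O) (M : Matrix (Fin 2) (Fin 2) O) (f : MvPolynomial (Fin 2) O') :
    cret ret (msub (M.map (algebraMap O O')) f) = msub M (cret ret f) := by
  induction f using MvPolynomial.induction_on' with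
  | monomial s c =>
    have : monomial s c = C c * map (algebraMap O O') (monomial s 1) := by
      rw [map_monomial, map_one, C_mul_monomial, mul_one]
    rw [this, cret_C_mul, map_mul (msub _), ← map_msub, msub_C, cret_C_mul, map_mul (msub _),
      msub_C]
  | add p q hp hq => simp only [map_add, hp, hq]

theorem cret_map {O O' : Type*} [CommRing O] [CommRing O'] [Algebra O O']
    (ret : O' →ₗ[O] O) (hret : ret 1 = 1) (f : MvPolynomial (Fin 2) O) :
    cret ret (map (algebraMap O O') f) = f := by
  have := cret_C_mul ret 1 f
  simpa [hret] using this


theorem cobd_triangular {O O' H : Type*} [CommRing O] [CommRing O'] [IsDomain O'] [Algebra O O']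
    [Algebra.IsIntegral O O'] (ret : O' →ₗ[O] O) (hret : ret 1 = 1)
    [Group H] [Finite H] (ρ : H →* Matrix.GeneralLinearGroup (Fin 2) O)
    (v0 v1 s t : O') (hst : s * v0 + t * v1 = 1)
    (hv : ∀ h : H, ∃ α : O',
      v0 * algebraMap O O' (ρ h 0 0) + v1 * algebraMap O O' (ρ h 1 0) = α * v0 ∧
      v0 * algebraMap O O' (ρ h 0 1) + v1 * algebraMap O O' (ρ h 1 1) = α * v1)
    (j1 j2 j3 : MvPolynomial (Fin 2) O)
    (h1 : ∀ h : H, msub (ρ h : Matrix (Fin 2) (Fin 2) O) j1 = j1)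
    (h2 : ∀ h : H, msub (ρ h : Matrix (Fin 2) (Fin 2) O) j2 = j2)
    (h3 : ∀ h : H, msub (ρ h : Matrix (Fin 2) (Fin 2) O) j3 = j3)
    (hmonic : ∀ x : MvPolynomial (Fin 2) O, ∃ p : Polynomial O, p.Monic ∧
      Polynomial.aeval x p ∈ Ideal.span {j1, j2, j3})
    (w : H → MvPolynomial (Fin 2) O)
    (w1 : @IsCobd _ _ _ _ (polyAction ρ) (fun g => j1 * w g))
    (w2 : @IsCobd _ _ _ _ (polyAction ρ) (fun g => j2 * w g))
    (w3 : @IsCobd _ _ _ _ (polyAction ρ) (fun g => j3 * w g)) :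
    @IsCobd _ _ _ _ (polyAction ρ) w := by
  let φ := map (σ := Fin 2) (algebraMap O O')
  let ρ' : H →* Matrix.GeneralLinearGroup (Fin 2) O' :=
    (Matrix.GeneralLinearGroup.map (algebraMap O O')).comp ρ
  have hρ' : ∀ h, (ρ' h : Matrix (Fin 2) (Fin 2) O') =
      (ρ h : Matrix (Fin 2) (Fin 2) O).map (algebraMap O O') := fun h => rfl
  let act : MulSemiringAction H (MvPolynomial (Fin 2) O') := polyAction ρ'
  have hact : ∀ (h : H) (f : MvPolynomial (Fin 2) O'),
    h • f = msub ((ρ h⁻¹ : Matrix (Fin 2) (Fin 2) O).map (algebraMap O O')) f := fun _ _ => rfl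
  have hactφ : ∀ (h : H) f, h • φ f = φ (msub (ρ h⁻¹ : Matrix (Fin 2) (Fin 2) O) f) :=
    fun h f => by rw [hact, map_msub]
  have tr : ∀ j, @IsCobd _ _ _ _ (polyAction ρ) (fun g => j * w g) →
      IsCobd (fun g => φ j * φ (w g)) := by
    rintro j ⟨z, hz⟩
    refine ⟨φ z, fun g => ?_⟩
    have := congrArg φ (hz g)
    rw [map_mul, map_sub] at this
    rw [hactφ]; exact this
  let γ : Matrix (Fin 2) (Fin 2) O' := !![-t, s; v0, v1]
  let δ : Matrix (Fin 2) (Fin 2) O' := !![-v1, s; v0, t]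
  have hγδ : γ * δ = 1 := by
    ext i j
    fin_cases i <;> fin_cases j <;> simp [γ, δ, Matrix.mul_apply] <;>
      first | ring1 | linear_combination hst
  have hδγ : δ * γ = 1 := mul_eq_one_comm.1 hγδ
  let e : MvPolynomial (Fin 2) O' ≃ₐ[O] Polynomial (MvPolynomial (Fin 1) O') :=
    ((msubEquiv δ γ hδγ hγδ).trans (finSuccEquiv O' 1)).restrictScalars O
  let N : H → Matrix (Fin 2) (Fin 2) O' := fun h =>
    γ * (ρ h⁻¹ : Matrix (Fin 2) (Fin 2) O).map (algebraMap O O') * δ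
  have he : ∀ (h : H) g, e (h • e.symm g) =
      finSuccEquiv O' 1 (msub (N h) ((finSuccEquiv O' 1).symm g)) := by
    intro h g
    have e1 : e.symm g = msub γ ((finSuccEquiv O' 1).symm g) := rfl
    have e2 : ∀ f, e f = finSuccEquiv O' 1 (msub δ f) := fun _ => rfl
    rw [e1, e2, hact, msub_msub, msub_msub, ← Matrix.mul_assoc]
  have hN10 : ∀ h, N h 1 0 = 0 := by
    intro h
    obtain ⟨α, a1, a2⟩ := hv h⁻¹
    simp only [N]
    generalize (ρ h⁻¹ : Matrix (Fin 2) (Fin 2) O) = r at a1 a2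
    simp only [N, γ, δ, Matrix.mul_apply, Fin.sum_univ_two, Matrix.map_apply]
    simp
    linear_combination (-v1) * a1 + v0 * a2
  have hN00 : ∀ h, IsUnit (N h 0 0) := by
    intro h
    have hu : IsUnit (N h).det := by
      have : IsUnit (N h) := by
        refine (IsUnit.mul ?_ ?_).mul ?_
        · exact IsUnit.of_mul_eq_one _ hγδ
        · rw [← hρ']; exact (ρ' h⁻¹).isUnit
        · exact IsUnit.of_mul_eq_one _ hδγ
      exact (Matrix.isUnit_iff_isUnit_det _).1 this
    rw [Matrix.det_fin_two, hN10, mul_zero, sub_zero] at hu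
    exact isUnit_of_mul_isUnit_left hu
  have hs0 : (finSuccEquiv O' 1).symm Polynomial.X = X 0 := by
    rw [AlgEquiv.symm_apply_eq, finSuccEquiv_X_zero]
  have hs1 : finSuccEquiv O' 1 (X 1) = Polynomial.C (X 0) :=
    finSuccEquiv_X_succ (R := O') (n := 1) (j := 0)
  have hsc : ∀ (c : O') f, finSuccEquiv O' 1 (c • f) = Polynomial.C (C c) * finSuccEquiv O' 1 f := by
    intro c f
    rw [map_smul, Algebra.smul_def]; rfl
  have hmonic' : ∀ x : MvPolynomial (Fin 2) O', ∃ p : Polynomial O, p.Monic ∧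
      Polynomial.aeval x p ∈ Ideal.span {φ j1, φ j2, φ j3} := by
    have key : ∀ x : MvPolynomial (Fin 2) O', IsIntegral O
        (Ideal.Quotient.mk (Ideal.span {φ j1, φ j2, φ j3}) x) := by
      intro x
      induction x using MvPolynomial.induction_on with
      | C c =>
        have : IsIntegral O c := Algebra.IsIntegral.isIntegral c
        have := this.map ((Ideal.Quotient.mkₐ O' (Ideal.span {φ j1, φ j2, φ j3})).comp
          (Algebra.ofId O' (MvPolynomial (Fin 2) O')))
        exact this
      | add p q hp hq => rw [map_add]; exact hp.add hq
      | mul_X p i hp =>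
        rw [map_mul]
        refine hp.mul ?_
        obtain ⟨p, hp, hpm⟩ := hmonic (X i)
        refine ⟨p, hp, ?_⟩
        have hm := Ideal.mem_map_of_mem φ hpm
        rw [Ideal.map_span] at hm
        have e3 : φ (Polynomial.aeval (X i) p) = Polynomial.aeval (X i) p := by
          have : φ (X i) = X i := map_X _ _
          rw [← this, Polynomial.aeval_def, Polynomial.aeval_def, Polynomial.hom_eval₂]
          congr 1
          ext1 o
          simp [φ, algebraMap_eq, MvPolynomial.algebraMap_apply]
        rw [e3, Set.image_insert_eq, Set.image_insert_eq, Set.image_singleton] at hm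
        rw [← Ideal.Quotient.eq_zero_iff_mem] at hm
        rw [← hm, Polynomial.aeval_def, Polynomial.hom_eval₂]
        rfl
    intro x
    obtain ⟨p, hp, hp0⟩ := key x
    refine ⟨p, hp, ?_⟩
    rw [← Ideal.Quotient.eq_zero_iff_mem, ← hp0, Polynomial.aeval_def, Polynomial.hom_eval₂]
    rfl
  have hfix : ∀ j, (∀ h : H, msub (ρ h : Matrix (Fin 2) (Fin 2) O) j = j) →
      ∀ h : H, h • φ j = φ j := fun j hj h => by rw [hactφ, hj]
  obtain ⟨z, hz⟩ := cobd_poly_equiv e (H := H)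
    (fun h o => by
      rw [hact]
      exact (msub _).commutes (algebraMap O O' o))
    (fun h d => by
      rw [he]
      let ψ : MvPolynomial (Fin 1) O' →ₐ[O'] Polynomial (MvPolynomial (Fin 1) O') :=
        (Algebra.ofId (MvPolynomial (Fin 1) O') _).restrictScalars O'
      have hψ : ((finSuccEquiv O' 1).toAlgHom.comp ((msub (N h)).comp
          ((finSuccEquiv O' 1).symm.toAlgHom.comp ψ))) =
          ψ.comp (aeval (fun _ => C (N h 1 1) * X 0)) := by
        apply MvPolynomial.algHom_ext
        intro i
        have hi : i = 0 := Subsingleton.elim _ _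
        subst hi
        have e4 : ψ (X 0) = finSuccEquiv O' 1 (X 1) := hs1.symm
        have e5 : ψ (C (N h 1 1)) = Polynomial.C (C (N h 1 1)) := rfl
        rw [AlgHom.comp_apply, AlgHom.comp_apply, AlgHom.comp_apply, AlgHom.comp_apply, aeval_X,
          map_mul, e4, e5]
        change finSuccEquiv O' 1 (msub (N h) ((finSuccEquiv O' 1).symm (finSuccEquiv O' 1 (X 1))))
          = _
        rw [AlgEquiv.symm_apply_apply, msub_X, Fin.sum_univ_two, hN10, zero_smul, zero_add, hsc]
      exact ⟨_, DFunLike.congr_fun hψ d⟩)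
    (fun h => by
      rw [he, hs0, msub_X, Fin.sum_univ_two, map_add, hsc, hsc, finSuccEquiv_X_zero, hs1,
        ← map_mul Polynomial.C]
      exact ⟨_, _, (hN00 h).map C, rfl⟩)
    (φ j1) (φ j2) (φ j3) (hfix _ h1) (hfix _ h2) (hfix _ h3) hmonic'
    (fun g => φ (w g)) (tr _ w1) (tr _ w2) (tr _ w3)
  refine ⟨cret ret z, fun g => ?_⟩
  have := congrArg (cret ret) (hz g)
  rw [map_sub, hact, cret_msub, cret_map ret hret] at this
  exact this

end PartFive


section PartSix
open Polynomial

theorem exists_ret (O L : Type*) [CommRing O] [IsDomain O] [IsPrincipalIdealRing O]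
    [Field L] [Algebra (FractionRing O) L] [Algebra O L] [IsScalarTower O (FractionRing O) L]
    [Module.Finite O (integralClosure O L)] :
    ∃ ret : integralClosure O L →ₗ[O] O, ret 1 = 1 := by
  let O' := integralClosure O L
  let K := FractionRing O
  have hinj : Function.Injective (algebraMap O L) := by
    rw [IsScalarTower.algebraMap_eq O K L]
    exact (algebraMap K L).injective.comp (IsFractionRing.injective O K)
  have hinj' : Function.Injective (Algebra.linearMap O O') := by
    intro x y h
    exact hinj (congrArg (fun z : O' => (z : L)) h)
  let p := LinearMap.range (Algebra.linearMap O O')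
  have htf : Module.IsTorsionFree O (O' ⧸ p) := by
    apply Module.IsTorsionFree.of_smul_eq_zero
    intro c x hcx
    by_cases hc : c = 0
    · exact Or.inl hc
    right
    obtain ⟨x, rfl⟩ := Submodule.Quotient.mk_surjective _ x
    rw [← Submodule.Quotient.mk_smul, Submodule.Quotient.mk_eq_zero] at hcx
    rw [Submodule.Quotient.mk_eq_zero]
    obtain ⟨y, hy⟩ := hcx
    have hy' : algebraMap O L y = algebraMap O L c * (x : L) := by
      have := congrArg (fun z : O' => (z : L)) hy
      rw [← Algebra.smul_def]
      exact this
    have hcL : algebraMap O L c ≠ 0 := by rwa [Ne, map_eq_zero_iff _ hinj]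
    have hx : (x : L) = algebraMap K L (algebraMap O K y / algebraMap O K c) := by
      rw [map_div₀, ← IsScalarTower.algebraMap_apply, ← IsScalarTower.algebraMap_apply,
        eq_div_iff hcL, hy', mul_comm]
    have hxi : IsIntegral O (algebraMap O K y / algebraMap O K c) := by
      have : IsIntegral O (x : L) := x.2
      rw [hx] at this
      exact (isIntegral_algebraMap_iff (algebraMap K L).injective).1 this
    obtain ⟨r, hr⟩ := IsIntegrallyClosed.isIntegral_iff.1 hxi
    refine ⟨r, Subtype.ext ?_⟩
    rw [hx, ← hr, ← IsScalarTower.algebraMap_apply]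
    rfl
  obtain ⟨s, hs⟩ := Module.projective_lifting_property p.mkQ LinearMap.id p.mkQ_surjective
  let e := LinearEquiv.ofInjective (Algebra.linearMap O O') hinj'
  let d : O' →ₗ[O] p := LinearMap.codRestrict p (LinearMap.id - s ∘ₗ p.mkQ) (fun x => by
    rw [← Submodule.Quotient.mk_eq_zero p, ← Submodule.mkQ_apply]
    have := LinearMap.congr_fun hs (p.mkQ x)
    simp only [LinearMap.comp_apply, LinearMap.id_apply] at this
    simp only [LinearMap.sub_apply, LinearMap.comp_apply, LinearMap.id_apply, map_sub, this,
      sub_self])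
  refine ⟨e.symm.toLinearMap ∘ₗ d, ?_⟩
  have h1 : d 1 = e 1 := by
    apply Subtype.ext
    have : p.mkQ (1 : O') = 0 := by
      rw [Submodule.mkQ_apply, Submodule.Quotient.mk_eq_zero]
      exact ⟨1, by simp⟩
    simp [d, e, this]
  simp [h1]

theorem exists_ext.{u} (O : Type u) [CommRing O] [IsDomain O] [IsDiscreteValuationRing O] [CharZero O]
    (f : O[X]) (hf : f.Monic) (hd : f.natDegree ≠ 0) :
    ∃ (O' : Type u) (_ : CommRing O') (_ : IsDomain O') (_ : IsPrincipalIdealRing O')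
      (_ : Algebra O O') (_ : Algebra.IsIntegral O O') (ret : O' →ₗ[O] O) (x : O'),
      ret 1 = 1 ∧ aeval x f = 0 := by
  let K := FractionRing O
  have : CharZero K := IsFractionRing.charZero O
  let fK := f.map (algebraMap O K)
  let L := fK.SplittingField
  let O' := integralClosure O L
  have hfin : Module.Finite O O' := IsIntegralClosure.finite O K L O'
  have hded : IsDedekindDomain O' := integralClosure.isDedekindDomain O K L
  have hinj : Function.Injective (algebraMap O L) := by
    rw [IsScalarTower.algebraMap_eq O K L]
    exact (algebraMap K L).injective.comp (IsFractionRing.injective O K)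
  have hpid : IsPrincipalIdealRing O' := by
    have : FaithfulSMul O O' := by
      rw [faithfulSMul_iff_algebraMap_injective]
      intro x y h
      exact hinj (congrArg (fun z : O' => (z : L)) h)
    apply IsPrincipalIdealRing.of_finite_maximals
    refine (IsDedekindDomain.primesOver_finite (IsLocalRing.maximalIdeal O) O').subset ?_
    intro Q hQ
    have hQ : Q.IsMaximal := hQ
    refine ⟨hQ.isPrime, ⟨?_⟩⟩
    exact (IsLocalRing.eq_maximalIdeal (Ideal.isMaximal_comap_of_isIntegral_of_isMaximal Q)).symm
  obtain ⟨ret, hret⟩ := exists_ret O L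
  obtain ⟨x, hx⟩ : ∃ x : L, aeval x f = 0 := by
    have hs := SplittingField.splits fK
    obtain ⟨x, hx⟩ := hs.exists_eval_eq_zero (by
      rw [degree_map, hf.degree_map, degree_eq_natDegree hf.ne_zero]
      exact_mod_cast hd)
    refine ⟨x, ?_⟩
    rw [eval_map_algebraMap] at hx
    rwa [aeval_map_algebraMap] at hx
  refine ⟨O', inferInstance, inferInstance, hpid, inferInstance, inferInstance, ret,
    ⟨x, f, hf, hx⟩, hret, ?_⟩
  apply Subtype.ext
  have := (aeval_algHom_apply (integralClosure O L).val (⟨x, f, hf, hx⟩ : O') f)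
  exact this.symm.trans hx

theorem exists_commuting {O H : Type*} [CommRing O] [IsDomain O] [Group H] [Finite H]
    (q : ℕ) (hq : q.Prime) (hH : IsPGroup q H) (h2 : q = 2 → ∀ x : H, orderOf x ∣ 2)
    (ρ : H →* Matrix.GeneralLinearGroup (Fin 2) O) :
    (∀ h, ρ h ∈ Subgroup.center (Matrix.GeneralLinearGroup (Fin 2) O)) ∨
    ∃ z, ρ z ∉ Subgroup.center (Matrix.GeneralLinearGroup (Fin 2) O) ∧
      ∀ g, ρ z * ρ g = ρ g * ρ z := by
  have := Fact.mk hq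
  by_cases hcase : ∀ h, ρ h ∈ Subgroup.center (Matrix.GeneralLinearGroup (Fin 2) O)
  · exact Or.inl hcase
  right
  push Not at hcase
  by_cases hq2 : q = 2
  · obtain ⟨z, hz⟩ := hcase
    refine ⟨z, hz, fun g => ?_⟩
    rw [← map_mul, ← map_mul, (Commute.of_orderOf_dvd_two (h2 hq2) z g).eq]
  let Z := (Subgroup.center (Matrix.GeneralLinearGroup (Fin 2) O)).comap ρ
  have hZ : IsPGroup q (H ⧸ Z) := hH.to_quotient Z
  have hnt : Nontrivial (H ⧸ Z) := by
    obtain ⟨z, hz⟩ := hcase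
    exact ⟨⟨(z : H ⧸ Z), 1, fun h => hz ((QuotientGroup.eq_one_iff z).1 h)⟩⟩
  have := hZ.center_nontrivial
  obtain ⟨c, hc⟩ := exists_ne (1 : Subgroup.center (H ⧸ Z))
  obtain ⟨h, hh⟩ := QuotientGroup.mk_surjective (c : H ⧸ Z)
  refine ⟨h, fun hm => hc (Subtype.ext ?_), fun g => ?_⟩
  · rw [← hh]
    exact (QuotientGroup.eq_one_iff h).2 hm
  · have hcomm : (h * g * h⁻¹ * g⁻¹ : H) ∈ Z := by
      rw [← QuotientGroup.eq_one_iff]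
      have := Subgroup.mem_center_iff.1 c.2 (g : H ⧸ Z)
      rw [← hh] at this
      change (h : H ⧸ Z) * (g : H ⧸ Z) * (h : H ⧸ Z)⁻¹ * (g : H ⧸ Z)⁻¹ = 1
      rw [← this]; group
    have hcomm' : ρ (h * g * h⁻¹ * g⁻¹) ∈ Subgroup.center (Matrix.GeneralLinearGroup (Fin 2) O) :=
      hcomm
    obtain ⟨ζ, hζ⟩ := Matrix.GeneralLinearGroup.mem_center_iff_val_mem_range_scalar.1 hcomm'
    have hdet : ζ ^ 2 = 1 := by
      have h1 : Matrix.det (ρ (h * g * h⁻¹ * g⁻¹) : Matrix (Fin 2) (Fin 2) O) = 1 := by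
        have : Matrix.GeneralLinearGroup.det (ρ (h * g * h⁻¹ * g⁻¹)) = 1 := by
          simp only [map_mul, map_inv]
          rw [mul_comm (Matrix.GeneralLinearGroup.det (ρ h))]
          group
        exact congrArg Units.val this
      rw [← hζ] at h1
      simpa using h1
    have hpow : ζ ^ Nat.card H = 1 := by
      have h1 : (ρ (h * g * h⁻¹ * g⁻¹)) ^ Nat.card H = 1 := by
        rw [← map_pow, pow_card_eq_one', map_one]
      have h2 := congrArg (fun u => (Units.val u : Matrix (Fin 2) (Fin 2) O)) h1
      simp only [Units.val_pow_eq_pow_val] at h2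
      rw [← hζ, ← map_pow] at h2
      have := congrFun (congrFun h2 0) 0
      simpa using this
    have hodd : Odd (Nat.card H) := by
      obtain ⟨n, hn⟩ := IsPGroup.iff_card.1 hH
      rw [hn]
      exact (hq.odd_of_ne_two hq2).pow
    have hζ1 : ζ = 1 := by
      obtain ⟨m, hm⟩ := hodd
      rwa [hm, pow_succ, pow_mul, hdet, one_pow, one_mul] at hpow
    have hone : ρ (h * g * h⁻¹ * g⁻¹) = 1 := by
      apply Units.ext
      rw [← hζ, hζ1, map_one]; rfl
    have e1 : h * g = (h * g * h⁻¹ * g⁻¹) * (g * h) := by group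
    rw [← map_mul, e1, map_mul, hone, one_mul, map_mul]

theorem exists_eigen {O' : Type*} [CommRing O'] [IsDomain O'] [IsPrincipalIdealRing O']
    (z : Matrix (Fin 2) (Fin 2) O') (hz : z ∉ Set.range (Matrix.scalar (Fin 2)))
    (x : O') (hx : (z 0 0 - x) * (z 1 1 - x) - z 0 1 * z 1 0 = 0) :
    ∃ v0 v1 s t : O', s * v0 + t * v1 = 1 ∧
      ∀ g : Matrix (Fin 2) (Fin 2) O', z * g = g * z → ∃ α : O',
      v0 * g 0 0 + v1 * g 1 0 = α * v0 ∧ v0 * g 0 1 + v1 * g 1 1 = α * v1 := by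
  classical
  obtain ⟨u0, u1, hu, e1, e2⟩ : ∃ u0 u1 : O', (u0 ≠ 0 ∨ u1 ≠ 0) ∧
      u0 * (z 0 0 - x) + u1 * z 1 0 = 0 ∧ u0 * z 0 1 + u1 * (z 1 1 - x) = 0 := by
    by_cases h : z 1 0 ≠ 0 ∨ - (z 0 0 - x) ≠ 0
    · exact ⟨_, _, h, by ring, by linear_combination -hx⟩
    by_cases h' : z 1 1 - x ≠ 0 ∨ - z 0 1 ≠ 0
    · exact ⟨_, _, h', by linear_combination hx, by ring⟩
    exfalso
    push Not at h h'
    apply hz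
    refine ⟨x, ?_⟩
    ext i j
    fin_cases i <;> fin_cases j <;> simp
    · linear_combination h.2
    · linear_combination h'.2
    · exact h.1.symm
    · linear_combination -h'.1
  obtain ⟨d, hd⟩ := (IsPrincipalIdealRing.principal (Ideal.span {u0, u1} : Ideal O')).principal
  rw [← Ideal.span] at hd
  have m0 : u0 ∈ Ideal.span {d} := hd ▸ Ideal.subset_span (by simp)
  have m1 : u1 ∈ Ideal.span {d} := hd ▸ Ideal.subset_span (by simp)
  have md : d ∈ Ideal.span {u0, u1} := hd ▸ Ideal.subset_span (by simp)
  obtain ⟨v0, rfl⟩ := Ideal.mem_span_singleton.1 m0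
  obtain ⟨v1, rfl⟩ := Ideal.mem_span_singleton.1 m1
  obtain ⟨s, t, hst⟩ := Ideal.mem_span_pair.1 md
  have hd0 : d ≠ 0 := by
    rintro rfl
    simp at hu
  have hst' : s * v0 + t * v1 = 1 := mul_left_cancel₀ hd0 (by linear_combination hst)
  have f1 : v0 * (z 0 0 - x) + v1 * z 1 0 = 0 := mul_left_cancel₀ hd0 (by linear_combination e1)
  have f2 : v0 * z 0 1 + v1 * (z 1 1 - x) = 0 := mul_left_cancel₀ hd0 (by linear_combination e2)
  refine ⟨v0, v1, s, t, hst', fun g hg => ?_⟩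
  have c := fun i j => congrFun (congrFun hg i) j
  simp only [Matrix.mul_apply, Fin.sum_univ_two] at c
  set w0 := v0 * g 0 0 + v1 * g 1 0 with hw0
  set w1 := v0 * g 0 1 + v1 * g 1 1 with hw1
  have g1 : w0 * (z 0 0 - x) + w1 * z 1 0 = 0 := by
    linear_combination (- v0) * c 0 0 - v1 * c 1 0 + g 0 0 * f1 + g 1 0 * f2
  have g2 : w0 * z 0 1 + w1 * (z 1 1 - x) = 0 := by
    linear_combination (- v0) * c 0 1 - v1 * c 1 1 + g 0 1 * f1 + g 1 1 * f2
  have hΔ : v0 * w1 - v1 * w0 = 0 := by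
    by_contra hne
    apply hz
    refine ⟨x, ?_⟩
    have a00 : z 0 0 - x = 0 := (mul_eq_zero.1 (by
      linear_combination w1 * f1 - v1 * g1 :
        (v0 * w1 - v1 * w0) * (z 0 0 - x) = 0)).resolve_left hne
    have a10 : z 1 0 = 0 := (mul_eq_zero.1 (by
      linear_combination - w0 * f1 + v0 * g1 :
        (v0 * w1 - v1 * w0) * (z 1 0) = 0)).resolve_left hne
    have a01 : z 0 1 = 0 := (mul_eq_zero.1 (by
      linear_combination w1 * f2 - v1 * g2 :
        (v0 * w1 - v1 * w0) * (z 0 1) = 0)).resolve_left hne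
    have a11 : z 1 1 - x = 0 := (mul_eq_zero.1 (by
      linear_combination - w0 * f2 + v0 * g2 :
        (v0 * w1 - v1 * w0) * (z 1 1 - x) = 0)).resolve_left hne
    ext i j
    fin_cases i <;> fin_cases j <;> simp
    · linear_combination -a00
    · exact a01.symm
    · exact a10.symm
    · linear_combination -a11
  exact ⟨s * w0 + t * w1, by linear_combination (-t) * hΔ - w0 * hst',
    by linear_combination s * hΔ - w1 * hst'⟩

/-- the data needed for the triangular situation -/
theorem exists_triangular.{u} {O : Type u} {H : Type*} [CommRing O] [IsDomain O]
    [IsDiscreteValuationRing O]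
    [CharZero O] [Group H] [Finite H]
    (q : ℕ) (hq : q.Prime) (hH : IsPGroup q H) (h2 : q = 2 → ∀ x : H, orderOf x ∣ 2)
    (ρ : H →* Matrix.GeneralLinearGroup (Fin 2) O) :
    ∃ (O' : Type u) (_ : CommRing O') (_ : IsDomain O')
      (_ : Algebra O O') (_ : Algebra.IsIntegral O O') (ret : O' →ₗ[O] O) (v0 v1 s t : O'),
      ret 1 = 1 ∧ s * v0 + t * v1 = 1 ∧ ∀ h : H, ∃ α : O',
      v0 * algebraMap O O' (ρ h 0 0) + v1 * algebraMap O O' (ρ h 1 0) = α * v0 ∧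
      v0 * algebraMap O O' (ρ h 0 1) + v1 * algebraMap O O' (ρ h 1 1) = α * v1 := by
  rcases exists_commuting q hq hH h2 ρ with hs | ⟨z, hz, hcomm⟩
  · refine ⟨O, inferInstance, inferInstance, inferInstance, inferInstance, LinearMap.id,
      1, 0, 1, 0, rfl, by simp, fun h => ?_⟩
    obtain ⟨ζ, hζ⟩ := Matrix.GeneralLinearGroup.mem_center_iff_val_mem_range_scalar.1 (hs h)
    refine ⟨ζ, ?_, ?_⟩ <;> rw [← hζ] <;> simp
  · let zz : Matrix (Fin 2) (Fin 2) O := ρ z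
    obtain ⟨O', i1, i2, i3, i4, i5, ret, x, hret, hx⟩ := exists_ext O zz.charpoly
      zz.charpoly_monic (by rw [Matrix.charpoly_natDegree_eq_dim]; simp)
    have hinj : Function.Injective (algebraMap O O') := by
      intro a b hab
      have := congrArg ret hab
      rwa [Algebra.algebraMap_eq_smul_one, Algebra.algebraMap_eq_smul_one, map_smul, map_smul,
        hret, smul_eq_mul, smul_eq_mul, mul_one, mul_one] at this
    obtain ⟨v0, v1, s, t, hst, hv⟩ := exists_eigen (zz.map (algebraMap O O')) (by
        rintro ⟨y, hy⟩
        apply hz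
        rw [Matrix.GeneralLinearGroup.mem_center_iff_val_mem_range_scalar]
        have c := fun i j => congrFun (congrFun hy i) j
        simp only [Matrix.map_apply] at c
        refine ⟨zz 0 0, ?_⟩
        change _ = zz
        ext i j
        apply hinj
        have c00 := c 0 0
        have := c i j
        fin_cases i <;> fin_cases j <;> simp at this c00 ⊢
        · exact this
        · exact this
        · exact c00.symm.trans this) x (by
        rw [Matrix.charpoly_fin_two] at hx
        simp only [map_add, map_sub, map_mul, map_pow, aeval_X, aeval_C, Matrix.trace_fin_two,
          Matrix.det_fin_two] at hx
        simp only [Matrix.map_apply]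
        linear_combination hx)
    refine ⟨O', i1, i2, i4, i5, ret, v0, v1, s, t, hret, hst, fun h => ?_⟩
    refine hv ((ρ h : Matrix (Fin 2) (Fin 2) O).map (algebraMap O O')) ?_
    rw [← Matrix.map_mul, ← Matrix.map_mul]
    exact congrArg (fun u : Matrix.GeneralLinearGroup (Fin 2) O =>
      (u : Matrix (Fin 2) (Fin 2) O).map (algebraMap O O')) (hcomm h)

end PartSix


section PartSeven
open MvPolynomial

theorem ker_residue {O : Type*} [CommRing O] [IsLocalRing O] (π : O)
    (hπ : IsLocalRing.maximalIdeal O = Ideal.span {π}) :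
    RingHom.ker (map (IsLocalRing.residue O) :
      MvPolynomial (Fin 2) O →+* MvPolynomial (Fin 2) (IsLocalRing.ResidueField O)) =
    Ideal.span {C π} := by
  rw [MvPolynomial.ker_map, IsLocalRing.ker_residue, hπ, Ideal.map_span, Set.image_singleton]

theorem int_mod {O : Type*} [CommRing O] [IsLocalRing O] (π : O)
    (hπ : IsLocalRing.maximalIdeal O = Ideal.span {π}) (a b : MvPolynomial (Fin 2) O)
    (ha : map (IsLocalRing.residue O) a ≠ 0)
    (hab : ∀ p, Prime p → p ∣ map (IsLocalRing.residue O) a → ¬ p ∣ map (IsLocalRing.residue O) b)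
    (x : MvPolynomial (Fin 2) O) : ∃ p : Polynomial O, p.Monic ∧
      Polynomial.aeval x p ∈ Ideal.span {C π, a, b} := by
  have hfin := finite_quot _ _ ha hab
  set f : MvPolynomial (Fin 2) O →+* MvPolynomial (Fin 2) (IsLocalRing.ResidueField O) :=
    map (IsLocalRing.residue O) with hf
  have hfs : Function.Surjective f := map_surjective _ (IsLocalRing.residue_surjective)
  obtain ⟨p, hp, hp0⟩ := Algebra.IsIntegral.isIntegral (R := IsLocalRing.ResidueField O)
    (Ideal.Quotient.mk (Ideal.span {f a, f b}) (f x))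
  obtain ⟨P, hP, -, hPm⟩ := Polynomial.lifts_and_natDegree_eq_and_monic
    (f := IsLocalRing.residue O) (p := p)
    ((Polynomial.lifts_iff_coeff_lifts _).2 fun k => IsLocalRing.residue_surjective _) hp
  refine ⟨P, hPm, ?_⟩
  have h1 : f (Polynomial.aeval x P) = Polynomial.aeval (f x) p := by
    rw [← hP, Polynomial.aeval_def, Polynomial.aeval_def, Polynomial.hom_eval₂,
      Polynomial.eval₂_map]
    congr 1
    ext c
    simp [hf, MvPolynomial.algebraMap_eq]
  have h2 : f (Polynomial.aeval x P) ∈ Ideal.span {f a, f b} := by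
    rw [h1, ← Ideal.Quotient.eq_zero_iff_mem, ← hp0, Polynomial.aeval_def, Polynomial.hom_eval₂]
    rfl
  obtain ⟨c, d, hcd⟩ := Ideal.mem_span_pair.1 h2
  obtain ⟨c, rfl⟩ := hfs c
  obtain ⟨d, rfl⟩ := hfs d
  have h3 : Polynomial.aeval x P - (c * a + d * b) ∈ RingHom.ker f := by
    rw [RingHom.mem_ker, map_sub, map_add, map_mul, map_mul, hcd, sub_self]
  rw [hf, ker_residue π hπ] at h3
  have h4 : Polynomial.aeval x P - (c * a + d * b) ∈ Ideal.span {C π, a, b} :=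
    Ideal.span_mono (by simp) h3
  have h5 : c * a + d * b ∈ Ideal.span {C π, a, b} :=
    Ideal.add_mem _ (Ideal.mul_mem_left _ _ (Ideal.subset_span (by simp)))
      (Ideal.mul_mem_left _ _ (Ideal.subset_span (by simp)))
  simpa using Ideal.add_mem _ h4 h5

theorem cobd_dvr {O G : Type*} [CommRing O] [IsDomain O]
    [IsDiscreteValuationRing O] [CharZero O] [Group G] [Finite G]
    (ρ : G →* Matrix.GeneralLinearGroup (Fin 2) O)
    (q : ℕ) (hq : q.Prime) (hqm : (q : O) ∈ IsLocalRing.maximalIdeal O)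
    (h2 : q = 2 → ∀ (P : Sylow 2 G) (x : (P : Subgroup G)), orderOf x ∣ 2)
    (π : O) (hπ : IsLocalRing.maximalIdeal O = Ideal.span {π}) (a b : MvPolynomial (Fin 2) O)
    (hGa : ∀ g, msub (ρ g : Matrix (Fin 2) (Fin 2) O) a = a)
    (hGb : ∀ g, msub (ρ g : Matrix (Fin 2) (Fin 2) O) b = b)
    (ha : map (IsLocalRing.residue O) a ≠ 0)
    (hab : ∀ p, Prime p → p ∣ map (IsLocalRing.residue O) a → ¬ p ∣ map (IsLocalRing.residue O) b)
    (w : G → MvPolynomial (Fin 2) O) (hw : @IsCocyc _ _ _ _ (polyAction ρ) w)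
    (w1 : @IsCobd _ _ _ _ (polyAction ρ) (fun g => C π * w g))
    (w2 : @IsCobd _ _ _ _ (polyAction ρ) (fun g => a * w g))
    (w3 : @IsCobd _ _ _ _ (polyAction ρ) (fun g => b * w g)) :
    @IsCobd _ _ _ _ (polyAction ρ) w := by
  have : Fact q.Prime := ⟨hq⟩
  obtain ⟨H⟩ : Nonempty (Sylow q G) := inferInstance
  have hidx : ¬ q ∣ (H : Subgroup G).index := H.not_dvd_index
  have hu : IsUnit (((H : Subgroup G).index : ℕ) : O) := by
    by_contra hn
    have hn' : (((H : Subgroup G).index : ℕ) : O) ∈ IsLocalRing.maximalIdeal O := hn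
    have hc : Nat.Coprime q (H : Subgroup G).index := (Nat.Prime.coprime_iff_not_dvd hq).2 hidx
    obtain ⟨u, v, huv⟩ := (Nat.isCoprime_iff_coprime.2 hc)
    have : (1 : O) ∈ IsLocalRing.maximalIdeal O := by
      have e : (u : O) * (q : O) + (v : O) * (((H : Subgroup G).index : ℕ) : O) = 1 := by
        exact_mod_cast congrArg (Int.cast : ℤ → O) huv
      rw [← e]
      exact Ideal.add_mem _ (Ideal.mul_mem_left _ _ hqm) (Ideal.mul_mem_left _ _ hn')
    exact (Ideal.ne_top_iff_one _).1 (IsLocalRing.maximalIdeal.isMaximal O).ne_top this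
  obtain ⟨O', i1, i2, i3, i4, ret, v0, v1, s, t, hret, hst, hv⟩ :=
    exists_triangular q hq H.isPGroup' (by
      intro hq2 x
      subst hq2
      exact h2 rfl H x) (ρ.comp (H : Subgroup G).subtype)
  have key := cobd_triangular ret hret (ρ.comp (H : Subgroup G).subtype) v0 v1 s t hst hv
    (C π) a b (fun h => msub_C _ _) (fun h => hGa h) (fun h => hGb h) (int_mod π hπ a b ha hab)
    (fun h => w h) (by obtain ⟨z, hz⟩ := w1; exact ⟨z, fun g => hz g⟩)
    (by obtain ⟨z, hz⟩ := w2; exact ⟨z, fun g => hz g⟩)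
    (by obtain ⟨z, hz⟩ := w3; exact ⟨z, fun g => hz g⟩)
  letI := polyAction ρ
  refine cobd_of_subgroup (H : Subgroup G) ?_ w hw ?_
  · have := hu.map (C : O →+* MvPolynomial (Fin 2) O)
    simpa using this
  · obtain ⟨z, hz⟩ := key
    exact ⟨z, fun h hh => hz ⟨h, hh⟩⟩

end PartSeven


section PartEight
open MvPolynomial RingTheory.Sequence

/-- the ring of invariants of a representation -/
noncomputable def invs {O G : Type*} [CommRing O] [Group G]
    (ρ : G →* Matrix.GeneralLinearGroup (Fin 2) O) : Subalgebra O (MvPolynomial (Fin 2) O) where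
  carrier := {f | ∀ g, msub (ρ g : Matrix (Fin 2) (Fin 2) O) f = f}
  mul_mem' := by
    intro a b ha hb g
    rw [map_mul, ha g, hb g]
  add_mem' := by
    intro a b ha hb g
    rw [map_add, ha g, hb g]
  algebraMap_mem' := fun a g => msub_C _ a

variable {O G : Type*} [CommRing O] [Group G]
    (ρ : G →* Matrix.GeneralLinearGroup (Fin 2) O)

theorem mem_invs (f : MvPolynomial (Fin 2) O) :
    f ∈ invs ρ ↔ ∀ g, msub (ρ g : Matrix (Fin 2) (Fin 2) O) f = f := Iff.rfl

theorem invs_isInvariant :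
    @Algebra.IsInvariant (invs ρ) (MvPolynomial (Fin 2) O) G _ _ _ _ (polyAction ρ) := by
  let _ := polyAction ρ
  refine ⟨fun b hb => ⟨⟨b, fun g => ?_⟩, rfl⟩⟩
  have := hb g⁻¹
  change msub (ρ g⁻¹⁻¹ : Matrix (Fin 2) (Fin 2) O) b = b at this
  rwa [inv_inv] at this

theorem invs_smulComm :
    @SMulCommClass G (invs ρ) (MvPolynomial (Fin 2) O) (polyAction ρ).toSMul _ := by
  let _ := polyAction ρ
  refine ⟨fun g b x => ?_⟩
  change msub (ρ g⁻¹ : Matrix (Fin 2) (Fin 2) O) ((b : MvPolynomial (Fin 2) O) * x) =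
    (b : MvPolynomial (Fin 2) O) * msub (ρ g⁻¹ : Matrix (Fin 2) (Fin 2) O) x
  rw [map_mul, b.2]

theorem invs_integral [Finite G] : Algebra.IsIntegral (invs ρ) (MvPolynomial (Fin 2) O) := by
  let _ := polyAction ρ
  have := invs_isInvariant ρ
  have := invs_smulComm ρ
  exact Algebra.IsInvariant.isIntegral (invs ρ) (MvPolynomial (Fin 2) O) G

theorem invs_noeth [Finite G] [IsNoetherianRing O] : IsNoetherianRing (invs ρ) := by
  have := invs_integral ρ
  have hft : Algebra.FiniteType O (MvPolynomial (Fin 2) O) := inferInstance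
  have : Algebra.FiniteType (invs ρ) (MvPolynomial (Fin 2) O) :=
    Algebra.FiniteType.of_restrictScalars_finiteType O _ _
  have hf : Module.Finite (invs ρ) (MvPolynomial (Fin 2) O) := Algebra.IsIntegral.finite
  have := fg_of_fg_of_fg O (invs ρ) (MvPolynomial (Fin 2) O) hft.1 hf.1 Subtype.val_injective
  have : Algebra.FiniteType O (invs ρ) := ⟨this⟩
  exact Algebra.FiniteType.isNoetherianRing O _

theorem invs_height_le [Finite G] [IsNoetherianRing O] [Nontrivial O] (n : ℕ)
    (hn : ringKrullDim O ≤ n) (P : Ideal (invs ρ)) [P.IsPrime] : P.height ≤ (n + 2 : ℕ) := by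
  let _ := polyAction ρ
  have := invs_isInvariant ρ
  have := invs_smulComm ρ
  have := invs_integral ρ
  have := invs_noeth ρ
  obtain ⟨Q, -, hQ, hQP⟩ := Ideal.exists_ideal_over_prime_of_isIntegral
    (S := MvPolynomial (Fin 2) O) P ⊥ (by
      intro x hx
      have : x = 0 := Subtype.ext (by simpa using hx)
      rw [this]; exact P.zero_mem)
  have h := inv_height_eq (B := invs ρ) G Q
  have e : Q.under (invs ρ) = P := hQP
  rw [e] at h
  rw [h]
  have h1 := Ideal.height_le_ringKrullDim_of_isPrime (I := Q)
  rw [MvPolynomial.ringKrullDim_of_isNoetherianRing] at h1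
  have h2 : (Q.height : WithBot ℕ∞) ≤ ((n + 2 : ℕ) : ℕ∞) := h1.trans (by
    simp only [Nat.card_eq_fintype_card, Fintype.card_fin]
    push_cast
    exact add_le_add hn le_rfl)
  exact_mod_cast h2

theorem regseq_le_two [Finite G] [IsNoetherianRing O] [IsDomain O] [UniqueFactorizationMonoid O]
    (P : Ideal (invs ρ)) [P.IsPrime] (hP : P.height ≤ 2) :
    ∃ rs : List (invs ρ), (∀ x ∈ rs, x ∈ P) ∧ IsWeaklyRegular (invs ρ) rs ∧
      (rs.length : ℕ∞) = P.height := by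
  let _ := polyAction ρ
  have := invs_isInvariant ρ
  have := invs_smulComm ρ
  have := invs_noeth ρ
  by_cases hb : P = ⊥
  · exact ⟨[], by simp, by simp, by simp [hb]⟩
  have h0 : P.height ≠ 0 := by
    intro h
    have := Ideal.height_add_one_le_of_lt_of_isPrime (bot_lt_iff_ne_bot.2 hb)
    rw [h] at this
    simp at this
  by_cases h1 : 1 < P.height
  · obtain ⟨a, ha, b, hb', hab⟩ := exists_reg_two (R := MvPolynomial (Fin 2) O) G P h1 hb
    refine ⟨[a, b], by simp [ha, hb'], hab, ?_⟩
    have : (2 : ℕ∞) ≤ P.height := by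
      have := Order.add_one_le_of_lt h1
      rwa [one_add_one_eq_two] at this
    exact le_antisymm this hP
  · obtain ⟨a, ha, ha0⟩ := Submodule.exists_mem_ne_zero_of_ne_bot hb
    refine ⟨[a], by simp [ha], wreg_one fun x hx => (mul_eq_zero.1 hx).resolve_left ha0, ?_⟩
    have : (1 : ℕ∞) ≤ P.height := Order.one_le_iff_ne_zero.2 h0
    exact le_antisymm this (not_lt.1 h1)

theorem regseq_dvr [Finite G] [IsDomain O] [IsDiscreteValuationRing O] [CharZero O]
    (q : ℕ) (hq : q.Prime) (hqm : (q : O) ∈ IsLocalRing.maximalIdeal O)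
    (h2 : q = 2 → ∀ (P : Sylow 2 G) (x : (P : Subgroup G)), orderOf x ∣ 2)
    (P : Ideal (invs ρ)) [P.IsPrime]
    (hm : ∀ x ∈ IsLocalRing.maximalIdeal O, algebraMap O (invs ρ) x ∈ P) :
    ∃ rs : List (invs ρ), (∀ x ∈ rs, x ∈ P) ∧ IsWeaklyRegular (invs ρ) rs ∧
      (rs.length : ℕ∞) = P.height := by
  by_cases h3 : P.height ≤ 2
  · exact regseq_le_two ρ P h3
  rw [not_le] at h3
  let _ := polyAction ρ
  have := invs_isInvariant ρ
  have := invs_smulComm ρ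
  have := invs_noeth ρ
  have hle := invs_height_le ρ 1 (by
    have := (inferInstance : Ring.KrullDimLE 1 O)
    exact (Ring.krullDimLE_iff.1 this)) P
  obtain ⟨π, hπi⟩ := IsDiscreteValuationRing.exists_irreducible O
  have hπ := hπi.maximalIdeal_eq
  obtain ⟨a, ha, b, hb, hab⟩ := exists_reg_three (R := MvPolynomial (Fin 2) O) G P h3
    (algebraMap O (invs ρ) π) (by
      intro h
      apply hπi.ne_zero
      have := congrArg Subtype.val h
      change C π = 0 at this
      simpa using this)
    (map (IsLocalRing.residue O)) (map_surjective _ IsLocalRing.residue_surjective)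
    (ker_residue π hπ)
    (fun a b ha hab w hw w1 w2 w3 => cobd_dvr ρ q hq hqm h2 π hπ a b a.2 b.2 ha hab w hw w1 w2 w3)
  refine ⟨_, ?_, hab, ?_⟩
  · have : algebraMap O (invs ρ) π ∈ P := hm _ (by rw [hπ]; exact Ideal.mem_span_singleton_self π)
    simp [ha, hb, this]
  · have : (3 : ℕ∞) ≤ P.height := by
      have := Order.add_one_le_of_lt h3
      rwa [two_add_one_eq_three] at this
    exact le_antisymm this hle

end PartEight


section PartNine
open MvPolynomial RingTheory.Sequence

theorem cm_congr {R S : Type*} [CommRing R] [CommRing S] [IsLocalRing R] [IsLocalRing S]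
    (e : R ≃+* S) (h : IsCohenMacaulayLocalRing R) : IsCohenMacaulayLocalRing S := by
  obtain ⟨n, rs, h1, h2, h3, h4⟩ := h
  refine ⟨n, rs.map e, ?_, by simpa using h2, ?_, ?_⟩
  · rw [← ringKrullDim_eq_of_ringEquiv e, h1]
  · intro x hx
    obtain ⟨y, hy, rfl⟩ := List.mem_map.1 hx
    have := h3 y hy
    rw [IsLocalRing.mem_maximalIdeal, mem_nonunits_iff] at this ⊢
    rwa [MulEquiv.isUnit_map]
  · exact (AddEquiv.isRegular_congr (e := e.toAddEquiv) (List.forall₂_map_right_iff.mpr <|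
      List.forall₂_same.mpr fun r _ x => e.map_mul r x)).1 h4

theorem cm_of_regseq {B : Type*} [CommRing B] [IsNoetherianRing B] (P : Ideal B) [P.IsPrime]
    (h : ∃ rs : List B, (∀ x ∈ rs, x ∈ P) ∧ IsWeaklyRegular B rs ∧
      (rs.length : ℕ∞) = P.height) : IsCohenMacaulayLocalRing (Localization.AtPrime P) := by
  obtain ⟨rs, h1, h2, h3⟩ := h
  refine ⟨rs.length, rs.map (algebraMap B _), ?_, by simp, ?_,
    h2.isRegular_of_isLocalization_of_mem _ P h1⟩
  · rw [IsLocalization.AtPrime.ringKrullDim_eq_height P, ← h3]; rfl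
  · intro x hx
    obtain ⟨y, hy, rfl⟩ := List.mem_map.1 hx
    rw [IsLocalization.AtPrime.to_map_mem_maximal_iff (Localization.AtPrime P) P]
    exact h1 y hy

theorem cm_localize {B B' : Type*} [CommRing B] [CommRing B'] [Algebra B B'] (M : Submonoid B)
    [IsLocalization M B'] [IsNoetherianRing B'] (P : Ideal B) [P.IsPrime]
    (hM : Disjoint (M : Set B) P)
    (h : ∀ Q : Ideal B', Q.IsPrime → Q.under B = P → ∃ rs : List B', (∀ x ∈ rs, x ∈ Q) ∧
      IsWeaklyRegular B' rs ∧ (rs.length : ℕ∞) = Q.height) :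
    IsCohenMacaulayLocalRing (Localization.AtPrime P) := by
  let Q := P.map (algebraMap B B')
  have hQ : Q.IsPrime := IsLocalization.isPrime_of_isPrime_disjoint M B' P ‹_› hM
  have hQP : Q.under B = P := IsLocalization.under_map_of_isPrime_disjoint M B' ‹_› hM
  have hcm := cm_of_regseq Q (h Q hQ hQP)
  have := IsLocalization.isLocalization_isLocalization_atPrime_isLocalization (M := M)
    (Localization.AtPrime Q) Q
  have h2 : IsLocalization.AtPrime (Localization.AtPrime Q) P := by
    have e : Q.comap (algebraMap B B') = P := hQP
    simp_rw [e] at this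
    exact this
  exact cm_congr (IsLocalization.algEquiv P.primeCompl
    (Localization.AtPrime Q) (Localization.AtPrime P)).toRingEquiv hcm

variable {A G : Type*} [CommRing A] [Group G]
    (ρ : G →* Matrix.GeneralLinearGroup (Fin 2) A) (O : Type*) [CommRing O] [Algebra A O]

/-- base change of a representation -/
noncomputable def rhoBC : G →* Matrix.GeneralLinearGroup (Fin 2) O :=
  (Matrix.GeneralLinearGroup.map (algebraMap A O)).comp ρ

theorem rhoBC_coe (g : G) : (rhoBC ρ O g : Matrix (Fin 2) (Fin 2) O) =
    (ρ g : Matrix (Fin 2) (Fin 2) A).map (algebraMap A O) := rfl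

/-- base change of invariants -/
noncomputable def invsMap : invs ρ →+* invs (rhoBC ρ O) :=
  ((map (algebraMap A O) : MvPolynomial (Fin 2) A →+* MvPolynomial (Fin 2) O).comp
    (invs ρ).val.toRingHom).codRestrict (invs (rhoBC ρ O)) (fun f g => by
      rw [rhoBC_coe]
      change msub _ (map (algebraMap A O) (f : MvPolynomial (Fin 2) A)) =
        map (algebraMap A O) (f : MvPolynomial (Fin 2) A)
      rw [← map_msub, f.2])

theorem invsMap_coe (f : invs ρ) : (invsMap ρ O f : MvPolynomial (Fin 2) O) =
    map (algebraMap A O) (f : MvPolynomial (Fin 2) A) := rfl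

theorem invsMap_isLocalization (M : Submonoid A) [IsLocalization M O]
    (hinj : Function.Injective (algebraMap A O)) :
    @IsLocalization _ _ (M.map (algebraMap A (invs ρ))) (invs (rhoBC ρ O)) _
      (invsMap ρ O).toAlgebra := by
  let _ := (invsMap ρ O).toAlgebra
  have hmi : Function.Injective (map (algebraMap A O) :
    MvPolynomial (Fin 2) A → MvPolynomial (Fin 2) O) := map_injective _ hinj
  have hC : ∀ m : A, invsMap ρ O (algebraMap A _ m) =
      algebraMap O (invs (rhoBC ρ O)) (algebraMap A O m) := by
    intro m
    apply Subtype.ext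
    rw [invsMap_coe]
    exact map_C _ _
  refine ⟨?_, ?_, ?_⟩
  · rintro ⟨_, m, hm, rfl⟩
    change IsUnit (invsMap ρ O (algebraMap A _ m))
    rw [hC]
    exact (IsLocalization.map_units O ⟨m, hm⟩).map _
  · intro z
    let _ : Algebra (MvPolynomial (Fin 2) A) (MvPolynomial (Fin 2) O) :=
      MvPolynomial.algebraMvPolynomial
    obtain ⟨⟨f, ⟨_, m, hm, rfl⟩⟩, hf⟩ := IsLocalization.surj (M.map (C (σ := Fin 2)))
      (z : MvPolynomial (Fin 2) O)
    simp only [algebraMap_def, map_C] at hf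
    refine ⟨⟨⟨f, fun g => ?_⟩, ⟨_, m, hm, rfl⟩⟩, ?_⟩
    · apply hmi
      rw [map_msub, ← rhoBC_coe, ← hf, map_mul, msub_C, z.2]
    · change z * invsMap ρ O (algebraMap A _ m) = invsMap ρ O _
      rw [hC]
      exact Subtype.ext hf
  · intro x y hxy
    refine ⟨1, ?_⟩
    have : x = y := Subtype.ext (hmi (congrArg Subtype.val hxy))
    rw [this]

theorem exists_prime_mem_of_nat (p : Ideal A) [p.IsPrime] (n : ℕ) (hn : n ≠ 0)
    (h : (n : A) ∈ p) : ∃ q : ℕ, q.Prime ∧ (q : A) ∈ p := by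
  induction n using Nat.strong_induction_on with
  | _ n ih =>
    by_cases h1 : n = 1
    · subst h1
      exact absurd ((Ideal.eq_top_iff_one _).2 (by simpa using h)) (Ideal.IsPrime.ne_top ‹_›)
    obtain ⟨m, hm⟩ := Nat.minFac_dvd n
    have hq := Nat.minFac_prime h1
    have h' : ((n.minFac : ℕ) : A) * (m : A) ∈ p := by
      rw [← Nat.cast_mul, ← hm]; exact h
    rcases Ideal.IsPrime.mem_or_mem ‹_› h' with h3 | h3
    · exact ⟨_, hq, h3⟩
    · have hm0 : m ≠ 0 := by rintro rfl; simp at hm; exact hn hm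
      refine ih m ?_ hm0 h3
      have := hq.two_le
      calc m < 2 * m := by omega
        _ ≤ n.minFac * m := by gcongr
        _ = n := hm.symm

theorem cm_main (K : Type) [Field K] [NumberField K] [Finite G]
    (ρ : G →* Matrix.GeneralLinearGroup (Fin 2) (NumberField.RingOfIntegers K))
    (h2 : ∀ (P : Sylow 2 G) (x : (P : Subgroup G)), orderOf x ∣ 2) :
    IsCohenMacaulayRing (invs ρ) := by
  refine ⟨invs_noeth ρ, fun P hP => ?_⟩
  set A := NumberField.RingOfIntegers K with hA
  let p : Ideal A := P.comap (algebraMap A (invs ρ))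
  have hp : p.IsPrime := Ideal.comap_isPrime _ _
  let O := Localization.AtPrime p
  let M := p.primeCompl
  have hinj : Function.Injective (algebraMap A O) :=
    IsLocalization.injective O p.primeCompl_le_nonZeroDivisors
  have : IsDomain O := IsLocalization.isDomain_localization p.primeCompl_le_nonZeroDivisors
  have : CharZero O := charZero_of_injective_algebraMap hinj
  let _ := (invsMap ρ O).toAlgebra
  have := invsMap_isLocalization ρ O M hinj
  have hno : IsNoetherianRing O := IsLocalization.isNoetherianRing p.primeCompl O inferInstance
  have := invs_noeth (rhoBC ρ O)
  refine cm_localize (B' := invs (rhoBC ρ O)) (M.map (algebraMap A (invs ρ))) P ?_ ?_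
  · rw [Set.disjoint_left]
    rintro _ ⟨m, hm, rfl⟩ h
    exact hm h
  intro Q hQ hQP
  by_cases hp0 : p = ⊥
  · have hf : IsField O := by
      rw [IsLocalRing.isField_iff_maximalIdeal_eq, ← Localization.AtPrime.map_eq_maximalIdeal,
        Ideal.map_eq_bot_iff_of_injective hinj]
      exact hp0
    let _ := hf.toField
    refine regseq_le_two _ Q ?_
    exact invs_height_le _ 0 (by rw [ringKrullDim_eq_zero_of_isField hf]; simp) Q
  · have : IsDiscreteValuationRing O :=
      IsLocalization.AtPrime.isDiscreteValuationRing_of_dedekind_domain A hp0 O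
    obtain ⟨q, hq, hqp⟩ : ∃ q : ℕ, q.Prime ∧ (q : A) ∈ p := by
      exact exists_prime_mem_of_nat p (Ideal.absNorm p)
        (fun h => hp0 (Ideal.absNorm_eq_zero_iff.1 h)) (Ideal.absNorm_mem p)
    refine regseq_dvr _ q hq ?_ (fun _ => h2) Q ?_
    · have : algebraMap A O (q : A) ∈ IsLocalRing.maximalIdeal O :=
        (IsLocalization.AtPrime.to_map_mem_maximal_iff O p _).2 hqp
      rwa [map_natCast] at this
    · intro x hx
      rw [← Localization.AtPrime.map_eq_maximalIdeal] at hx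
      have h3 : p.map (algebraMap A O) ≤ Q.comap (algebraMap O _) := by
        rw [Ideal.map_le_iff_le_comap]
        intro y hy
        have hy' : algebraMap A (invs ρ) y ∈ Q.under (invs ρ) := by rw [hQP]; exact hy
        have hy2 : invsMap ρ O (algebraMap A (invs ρ) y) ∈ Q := hy'
        change algebraMap O _ (algebraMap A O y) ∈ Q
        convert hy2 using 1
        apply Subtype.ext
        rw [invsMap_coe]
        exact (map_C _ _).symm
      exact h3 hx

end PartNine


open NumberField in
/-- **Mixed characteristic case.** Let `A` be the ring of integers of a number field `K`.
Let `G ⊆ GL_2(A)` be a finite group acting linearly on `R = A[X, Y]` (fixing `A`). Assume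
that for every prime `p` dividing `|G|`, every Sylow `p`-subgroup of `G` has exponent `p`
(i.e. every non-identity element has order `p`). Then `R^G` is Cohen–Macaulay. -/
theorem mixed_char_invariants_cohenMacaulay
    (K : Type) [Field K] [NumberField K]
    (G : Subgroup (Matrix.GeneralLinearGroup (Fin 2) (𝓞 K))) [Finite ↥G]
    (hexp : ∀ p : ℕ, p.Prime → p ∣ Nat.card ↥G →
      ∀ (P : Sylow p ↥G) (x : ↥(P : Subgroup ↥G)), x ≠ 1 → orderOf x = p) :
    IsCohenMacaulayRing ↥(glInvariants G) := by
  have e : glInvariants G = invs G.subtype := by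
    ext f
    exact ⟨fun h g => h g.1 g.2, fun h g hg => h ⟨g, hg⟩⟩
  rw [e]
  refine cm_main K G.subtype fun P x => ?_
  by_cases hx : x = 1
  · simp [hx]
  · have hd : 2 ∣ Nat.card ↥G := by
      by_contra hd
      apply hx
      have hP : IsPGroup 2 (P : Subgroup ↥G) := P.isPGroup'
      obtain ⟨k, hk⟩ := IsPGroup.iff_orderOf.1 hP x
      have h1 : orderOf x ∣ Nat.card ↥G :=
        (orderOf_dvd_natCard x).trans (Subgroup.card_subgroup_dvd_card _)
      rw [hk] at h1
      rcases Nat.eq_zero_or_pos k with h0 | h0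
      · rw [h0, pow_zero] at hk
        exact orderOf_eq_one_iff.1 hk
      · exact absurd ((dvd_pow_self 2 h0.ne').trans h1) hd
    rw [hexp 2 Nat.prime_two hd P x hx]
end
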